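/- arXiv:2311.08985 — 8 statements merged into one kernel-verified Lean document; each statement's English description precedes it below -/
import Mathlib

section
/- Let 𝔤 be a finite-dimensional Lie algebra over a field of characteristic zero with solvable radical 𝔯 = rad(𝔤), and let 𝔤 = 𝔰 ⊕ 𝔯 be a Levi decomposition, i.e. 𝔰 is a semisimple Lie subalgebra of 𝔤 complementary to 𝔯 as a subspace. Consider the quotient V = 𝔯/[𝔯,𝔯] as an 𝔰-module (via the adjoint action). Then 𝔤 is perfect if and only if V contains no nonzero vector annihilated by 𝔰 (equivalently, V does not contain the trivial 1-dimensional 𝔰-module as a submodule). -/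
/-!
The key fact is that a finite-dimensional module `M` over a semisimple Lie algebra `𝔰` in
characteristic zero splits as `M = M^𝔰 ⊕ 𝔰M` (`isCompl_maxTriv_lie`).

This is proved by induction on `dim M`. If `𝔰` acts non-trivially, let `A` be an ideal complementary
to the kernel of the action. By Cartan's criterion the trace form of `M` is non-degenerate on `A`
(`restrict_traceForm_nondegenerate`), so dual bases of `A` give a Casimir operator `C`: it commutes
with `𝔰`, has image in `𝔰M`, kills `M^𝔰`, and has trace `dim A ≠ 0` (`exists_casimir`). In the
Fitting decomposition `M = ker Cᵏ ⊕ range Cᵏ` the second summand lies in `𝔰M` and meets `M^𝔰`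
trivially, while the first is a proper submodule, to which the induction hypothesis applies.

For the theorem, apply this to `V = 𝔯/[𝔯,𝔯]`: there are no nonzero invariants iff `𝔰V = V`, i.e. iff
`𝔯 = [𝔰,𝔯] + [𝔯,𝔯]`. Since `𝔰` is perfect (the splitting for the adjoint module, whose invariants
are the trivial centre), `[𝔤,𝔤] = 𝔰 ⊕ ([𝔰,𝔯] + [𝔯,𝔯])`, and this is `𝔤` under the same condition.
-/

open LieAlgebra

namespace LeviPerfect
attribute [local instance] LieRing.ofAssociativeRing

section
variable {K L M : Type*} [Field K] [LieRing L] [LieAlgebra K L] [FiniteDimensional K L]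
  [AddCommGroup M] [Module K M] [LieRingModule L M] [LieModule K L M] [FiniteDimensional K M]

/-- Faithfulness embeds `L` into `End M`, where `ad` of a nilpotent endomorphism is nilpotent; Engel's
theorem concludes. -/
lemma isNilpotent_of_faithful [LieModule.IsFaithful K L M] [LieModule.IsNilpotent L M] :
    LieRing.IsNilpotent L := by
  rw [LieAlgebra.isNilpotent_iff_forall (R := K)]
  intro x
  have hx : IsNilpotent (LieModule.toEnd K L M x) :=
    (LieModule.isNilpotent_iff_forall' (R := K)).mp inferInstance x
  obtain ⟨k, hk⟩ := LieAlgebra.ad_nilpotent_of_nilpotent (R := K) hx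
  refine ⟨k, LinearMap.ext fun y ↦ ?_⟩
  have key : ∀ n : ℕ, LieModule.toEnd K L M ((ad K L x ^ n) y) =
      (ad K (Module.End K M) (LieModule.toEnd K L M x) ^ n) (LieModule.toEnd K L M y) := by
    intro n
    induction n with
    | zero => simp
    | succ n ih => rw [pow_succ', pow_succ', Module.End.mul_apply, Module.End.mul_apply, ← ih]; simp
  have h0 := key k
  rw [hk] at h0
  exact (LieModule.toEnd_eq_zero_iff K L M).mp (by simpa using h0)

variable [CharZero K]

/-- Cartan's criterion for solvability, for the trace form of a faithful module. -/
lemma isSolvable_of_traceForm_eq_zero [LieModule.IsFaithful K L M]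
    (h : LieModule.traceForm K L M = 0) : IsSolvable L := by
  have := LieModule.isNilpotent_derivedSeries_of_traceForm_eq_zero h
  have : LieModule.IsFaithful K (derivedSeries K L 1) M :=
    (LieModule.isFaithful_iff' K _ M).mpr fun x hx ↦ Subtype.ext <|
      (LieModule.isFaithful_iff' K L M).mp (inferInstance : LieModule.IsFaithful K L M) x.1 hx
  have : LieRing.IsNilpotent (derivedSeries K L 1) := isNilpotent_of_faithful (K := K) (M := M)
  obtain ⟨k, hk⟩ := IsSolvable.solvable K (derivedSeries K L 1)
  rw [LieIdeal.derivedSeries_eq_bot_iff] at hk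
  refine IsSolvable.mk (R := K) (k := k + 1) ?_
  rwa [derivedSeries_def, derivedSeriesOfIdeal_add]

/-- If `L` has trivial radical and the ideal `A` acts faithfully on `M`, then the trace form of `M` is
non-degenerate on `A`: its radical there is a solvable ideal of `L`. -/
lemma restrict_traceForm_nondegenerate [HasTrivialRadical K L] (A : LieIdeal K L)
    (hA : A ⊓ LieModule.ker K L M = ⊥) :
    ((LieModule.traceForm K L M).restrict A.toSubmodule).Nondegenerate := by
  have hinv := LieModule.traceForm_lieInvariant K L M
  set N : LieIdeal K L := A ⊓ LieAlgebra.InvariantForm.orthogonal _ hinv A with hN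
  have hNA : N ≤ A := inf_le_left
  have : LieModule.IsFaithful K N M := (LieModule.isFaithful_iff' K _ M).mpr fun x hx ↦ by
    have : (x : L) ∈ A ⊓ LieModule.ker K L M :=
      ⟨hNA x.2, (LieModule.mem_ker K L M _).mpr hx⟩
    rw [hA] at this
    exact Subtype.ext (by simpa using this)
  have hz : LieModule.traceForm K N M = 0 := by
    ext x y
    exact (LieAlgebra.InvariantForm.mem_orthogonal _ hinv _ _).mp y.2.2 x (hNA x.2)
  have hbot : N = ⊥ := HasTrivialRadical.eq_bot_of_isSolvable (R := K) N
    (hI := isSolvable_of_traceForm_eq_zero (K := K) (M := M) hz)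
  have hsymm := (LieModule.traceForm_isSymm K L M)
  have aux : ∀ x : A, (∀ y : A, LieModule.traceForm K L M y x = 0) → x = 0 := by
    intro x hx
    have : (x : L) ∈ N := ⟨x.2, (LieAlgebra.InvariantForm.mem_orthogonal _ hinv _ _).mpr
      fun y hy ↦ hx ⟨y, hy⟩⟩
    rw [hbot] at this
    exact Subtype.ext (by simpa using this)
  refine ⟨fun x hx ↦ aux x fun y ↦ ?_, fun x hx ↦ aux x hx⟩
  rw [LieModule.traceForm_comm]; exact hx y

/-- The Casimir operator of a non-trivial module: it commutes with the action, maps into `⁅L, M⁆`,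
kills the invariants and has nonzero trace. -/
lemma exists_casimir [HasTrivialRadical K L] (hM : ¬ LieModule.IsTrivial L M) :
    ∃ C : Module.End K M, (∀ (x : L) (m : M), C ⁅x, m⁆ = ⁅x, C m⁆) ∧
      (∀ m, C m ∈ ⁅(⊤ : LieIdeal K L), (⊤ : LieSubmodule K L M)⁆) ∧
      (∀ m ∈ LieModule.maxTrivSubmodule K L M, C m = 0) ∧
      LinearMap.trace K M C ≠ 0 := by
  classical
  set A : LieIdeal K L := (LieModule.ker K L M).killingCompl with hA
  have hc := LieIdeal.isCompl_killingCompl (LieModule.ker K L M)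
  have hA0 : A ≠ ⊥ := by
    intro h
    rw [← hA, h] at hc
    refine hM ⟨fun x m ↦ (LieModule.mem_ker K L M x).mp ?_ m⟩
    rw [eq_top_of_isCompl_bot hc]
    trivial
  set B := (LieModule.traceForm K L M).restrict A.toSubmodule with hB
  have hnd : B.Nondegenerate := restrict_traceForm_nondegenerate A
    (by rw [inf_comm]; exact hc.inf_eq_bot)
  have hsymm : B.IsSymm := ⟨fun x y ↦ LieModule.traceForm_comm K L M x y⟩
  let b := Module.finBasis K A.toSubmodule
  let b' := B.dualBasis hnd b
  have hinv : ∀ (x : L) (u v : A), B ⟨⁅x, (u : L)⁆, lie_mem_right K L A x u u.2⟩ v =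
      - B u ⟨⁅x, (v : L)⁆, lie_mem_right K L A x v v.2⟩ := by
    intro x u v
    exact LieModule.traceForm_lieInvariant K L M x u v
  -- `c x` is the matrix of `ad x` on `A` in the basis `b`; by invariance of `B`, the matrix of
  -- `ad x` in the dual basis is minus its transpose.
  let c : L → Fin _ → Fin _ → K := fun x i j ↦
    B ⟨⁅x, (b i : L)⁆, lie_mem_right K L A x _ (b i).2⟩ (b' j)
  have hb : ∀ x i, ⁅x, (b i : L)⁆ = ∑ j, c x i j • (b j : L) := by
    intro x i
    have h1 := (B.dualBasis hnd b').sum_repr ⟨⁅x, (b i : L)⁆, lie_mem_right K L A x _ (b i).2⟩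
    simp only [LinearMap.BilinForm.dualBasis_repr_apply] at h1
    rw [LinearMap.BilinForm.dualBasis_dualBasis hnd hsymm] at h1
    simpa using! congrArg Subtype.val h1.symm
  have hb' : ∀ x i, ⁅x, (b' i : L)⁆ = - ∑ j, c x j i • (b' j : L) := by
    intro x i
    have h1 := b'.sum_repr ⟨⁅x, (b' i : L)⁆, lie_mem_right K L A x _ (b' i).2⟩
    simp only [b', LinearMap.BilinForm.dualBasis_repr_apply] at h1
    have h2 : ∀ j, B ⟨⁅x, (b' i : L)⁆, lie_mem_right K L A x _ (b' i).2⟩ (b j) = - c x j i := by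
      intro j
      rw [hinv, ← hsymm.eq]
    simp only [b'] at h2
    simp only [h2] at h1
    simpa using! congrArg Subtype.val h1.symm
  refine ⟨∑ i, LieModule.toEnd K L M (b i) ∘ₗ LieModule.toEnd K L M (b' i), ?_, ?_, ?_, ?_⟩
  · intro x m
    have h1 : ∀ i, ⁅(b i : L), ⁅(b' i : L), ⁅x, m⁆⁆⁆ = ⁅x, ⁅(b i : L), ⁅(b' i : L), m⁆⁆⁆
        - ⁅⁅x, (b i : L)⁆, ⁅(b' i : L), m⁆⁆ - ⁅(b i : L), ⁅⁅x, (b' i : L)⁆, m⁆⁆ := by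
      intro i
      simp only [lie_lie, lie_sub]; abel
    have h2 : ∑ i, ⁅⁅x, (b i : L)⁆, ⁅(b' i : L), m⁆⁆ +
        ∑ i, ⁅(b i : L), ⁅⁅x, (b' i : L)⁆, m⁆⁆ = 0 := by
      simp only [hb, hb', sum_lie, smul_lie, neg_lie, lie_neg, lie_sum, lie_smul]
      rw [Finset.sum_neg_distrib, Finset.sum_comm, add_neg_cancel]
    simp only [LinearMap.sum_apply, LinearMap.comp_apply, LieModule.toEnd_apply_apply, h1,
      Finset.sum_sub_distrib, lie_sum]
    rw [sub_sub, h2, sub_zero]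
  · intro m
    simp only [LinearMap.sum_apply, LinearMap.comp_apply, LieModule.toEnd_apply_apply]
    exact sum_mem fun i _ ↦ LieSubmodule.lie_mem_lie trivial trivial
  · intro m hm
    simp [(LieModule.mem_maxTrivSubmodule K L M m).mp hm]
  · have h3 : ∀ i, LinearMap.trace K M (LieModule.toEnd K L M (b i) ∘ₗ LieModule.toEnd K L M (b' i))
        = 1 := by
      intro i
      have := LinearMap.BilinForm.apply_dualBasis_right hnd hsymm b i i
      rw [if_pos rfl] at this
      exact this
    rw [map_sum, Finset.sum_congr rfl fun i _ ↦ h3 i]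
    simp only [Finset.sum_const, Finset.card_univ, Fintype.card_fin, nsmul_eq_mul, mul_one]
    rw [Nat.cast_ne_zero]
    intro h
    exact hA0 ((LieSubmodule.toSubmodule_eq_bot A).mp (Submodule.finrank_eq_zero.mp h))

end

/-- A finite-dimensional module over a semisimple Lie algebra in characteristic zero is the direct
sum of its invariants and of `⁅L, M⁆`. The dimension `n` is a parameter for the induction. -/
theorem isCompl_maxTriv_lie {K L : Type*} [Field K] [CharZero K] [LieRing L] [LieAlgebra K L]
    [FiniteDimensional K L] [HasTrivialRadical K L] (n : ℕ) :
    ∀ (M : Type*) [AddCommGroup M] [Module K M] [LieRingModule L M] [LieModule K L M]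
      [FiniteDimensional K M], Module.finrank K M = n →
      IsCompl (LieModule.maxTrivSubmodule K L M) ⁅(⊤ : LieIdeal K L), (⊤ : LieSubmodule K L M)⁆ := by
  induction n using Nat.strong_induction_on with
  | _ n ih =>
  intro M _ _ _ _ _ hn
  by_cases htriv : LieModule.IsTrivial L M
  · have h1 : LieModule.maxTrivSubmodule K L M = ⊤ := by
      rw [eq_top_iff]
      intro m _ x
      exact htriv.trivial x m
    rw [h1, (LieSubmodule.lie_eq_bot_iff _ _).mpr (fun x _ m _ ↦ htriv.trivial x m)]
    exact isCompl_top_bot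
  obtain ⟨C, hcomm, hmem, hker, htr⟩ := exists_casimir (K := K) htriv
  obtain ⟨k, hk, hk1⟩ := (C.eventually_isCompl_ker_pow_range_pow.and
    (Filter.eventually_ge_atTop 1)).exists
  have hcommk : ∀ (x : L) (m : M), (C ^ k) ⁅x, m⁆ = ⁅x, (C ^ k) m⁆ := by
    clear hk hk1
    intro x m
    induction k with
    | zero => simp
    | succ k ihk => rw [pow_succ', Module.End.mul_apply, Module.End.mul_apply, ihk, hcomm]
  let V₀ : LieSubmodule K L M :=
    { LinearMap.ker (C ^ k) with
      lie_mem := by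
        intro x m hm
        have hm' : (C ^ k) m = 0 := hm
        change (C ^ k) ⁅x, m⁆ = 0
        rw [hcommk, hm', lie_zero] }
  let V₁ : LieSubmodule K L M :=
    { LinearMap.range (C ^ k) with
      lie_mem := by
        rintro x _ ⟨m, rfl⟩
        exact ⟨⁅x, m⁆, hcommk x m⟩ }
  have hV : IsCompl V₀ V₁ := by
    rw [← LieSubmodule.isCompl_toSubmodule]; exact hk
  have hlt : Module.finrank K V₀ < n := by
    rw [← hn]
    refine Submodule.finrank_lt (s := V₀.toSubmodule) fun h ↦ htr ?_
    have : IsNilpotent C := ⟨k, LinearMap.ker_eq_top.mp h⟩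
    exact (LinearMap.isNilpotent_trace_of_isNilpotent this).eq_zero
  have ih₀ := ih _ hlt V₀ rfl
  have hmap : LieSubmodule.map V₀.incl ⁅(⊤ : LieIdeal K L), (⊤ : LieSubmodule K L V₀)⁆ =
      ⁅(⊤ : LieIdeal K L), V₀⁆ := by
    rw [LieSubmodule.map_bracket_eq]
    simp
  have hV₁ : V₁ ≤ ⁅(⊤ : LieIdeal K L), (⊤ : LieSubmodule K L M)⁆ := by
    rintro _ ⟨m, rfl⟩
    obtain ⟨j, rfl⟩ := Nat.exists_eq_add_of_le' hk1
    rw [pow_succ', Module.End.mul_apply]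
    exact hmem _
  have hV₀triv : LieSubmodule.map V₀.incl (LieModule.maxTrivSubmodule K L V₀) ≤
      LieModule.maxTrivSubmodule K L M := by
    rintro _ ⟨m, hm, rfl⟩
    intro x
    exact congrArg Subtype.val (hm x)
  constructor
  · rw [disjoint_iff, eq_bot_iff]
    rintro m ⟨hm, hm'⟩
    have hm₀ : m ∈ V₀ := by
      obtain ⟨j, rfl⟩ := Nat.exists_eq_add_of_le' hk1
      change (C ^ (j + 1)) m = 0
      rw [pow_succ, Module.End.mul_apply, hker m hm, map_zero]
    have hle : ⁅(⊤ : LieIdeal K L), (⊤ : LieSubmodule K L M)⁆ ≤ ⁅(⊤ : LieIdeal K L), V₀⁆ ⊔ V₁ := by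
      rw [← hV.sup_eq_top, LieSubmodule.lie_sup]
      exact sup_le_sup_left (LieSubmodule.lie_le_right _ _) _
    obtain ⟨u, hu, w, hw, rfl⟩ := (LieSubmodule.mem_sup _ _ _).mp (hle hm')
    have hw0 : w ∈ V₀ ⊓ V₁ := ⟨by
      simpa using sub_mem hm₀ (LieSubmodule.lie_le_right V₀ ⊤ hu), hw⟩
    rw [hV.inf_eq_bot, LieSubmodule.mem_bot] at hw0
    subst hw0
    rw [add_zero] at hm hm₀ ⊢
    rw [← hmap] at hu
    obtain ⟨v, hv, rfl⟩ := hu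
    have : v ∈ LieModule.maxTrivSubmodule K L V₀ ⊓
        ⁅(⊤ : LieIdeal K L), (⊤ : LieSubmodule K L V₀)⁆ :=
      ⟨fun x ↦ Subtype.ext (hm x), hv⟩
    rw [ih₀.inf_eq_bot, LieSubmodule.mem_bot] at this
    simp [this]
  · rw [codisjoint_iff, eq_top_iff]
    refine hV.sup_eq_top.ge.trans (sup_le ?_ (hV₁.trans le_sup_right))
    calc V₀ = LieSubmodule.map V₀.incl ⊤ := by simp
      _ = LieSubmodule.map V₀.incl (LieModule.maxTrivSubmodule K L V₀) ⊔
            ⁅(⊤ : LieIdeal K L), V₀⁆ := by rw [← ih₀.sup_eq_top, LieSubmodule.map_sup, hmap]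
      _ ≤ _ := sup_le_sup hV₀triv (LieSubmodule.mono_lie_right _ le_top)

end LeviPerfect

/-- Let `𝔤` be a finite-dimensional Lie algebra over a field of characteristic zero with a
Levi decomposition `𝔤 = 𝔰 ⊕ rad(𝔤)`.  Then `𝔤` is perfect if and only if the `𝔰`-module
`V = 𝔯/[𝔯,𝔯]` (with `𝔯 = rad(𝔤)`) contains no nonzero vector annihilated by `𝔰`;
concretely, every `x ∈ 𝔯` with `⁅y, x⁆ ∈ [𝔯,𝔯]` for all `y ∈ 𝔰` lies in `[𝔯,𝔯]`. -/
theorem perfect_iff_no_trivial_vector_in_radical_quotient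
    {K : Type*} [Field K] [CharZero K]
    {L : Type*} [LieRing L] [LieAlgebra K L] [FiniteDimensional K L]
    (s : LieSubalgebra K L) (hs : LieAlgebra.IsSemisimple K s)
    (h_inf : s.toSubmodule ⊓ (LieAlgebra.radical K L).toSubmodule = ⊥)
    (h_sup : s.toSubmodule ⊔ (LieAlgebra.radical K L).toSubmodule = ⊤) :
    ⁅(⊤ : LieIdeal K L), (⊤ : LieIdeal K L)⁆ = ⊤ ↔
      ∀ x ∈ LieAlgebra.radical K L,
        (∀ y ∈ s, ⁅y, x⁆ ∈ ⁅LieAlgebra.radical K L, LieAlgebra.radical K L⁆) →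
          x ∈ ⁅LieAlgebra.radical K L, LieAlgebra.radical K L⁆ := by
  set r := LieAlgebra.radical K L with hr
  let D : LieSubmodule K L r := LieSubmodule.comap (LieSubmodule.incl r) ⁅r, r⁆
  let V := r ⧸ D
  have : LieModule K s V := inferInstance
  have hV : IsCompl (LieModule.maxTrivSubmodule K s V)
      ⁅(⊤ : LieIdeal K s), (⊤ : LieSubmodule K s V)⁆ :=
    LeviPerfect.isCompl_maxTriv_lie _ V rfl
  have hmk : ∀ x : r, (LieSubmodule.Quotient.mk x : V) = 0 ↔ (x : L) ∈ ⁅r, r⁆ := by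
    intro x
    rw [LieSubmodule.Quotient.mk_eq_zero']
    rfl
  have htriv : (∀ x ∈ r, (∀ y ∈ s, ⁅y, x⁆ ∈ ⁅r, r⁆) → x ∈ ⁅r, r⁆) ↔
      LieModule.maxTrivSubmodule K s V = ⊥ := by
    rw [LieSubmodule.eq_bot_iff]
    constructor
    · intro h v hv
      obtain ⟨x, rfl⟩ := LieSubmodule.Quotient.surjective_mk' D v
      refine (hmk x).mpr (h x x.2 fun y hy ↦ ?_)
      exact (hmk ⁅y, x⁆).mp (hv ⟨y, hy⟩)
    · intro h x hx hxs
      refine (hmk ⟨x, hx⟩).mp (h _ fun y ↦ ?_)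
      exact (hmk ⁅(y : L), (⟨x, hx⟩ : r)⁆).mpr (hxs y y.2)
  -- `W` is the preimage of `𝔰V` in `𝔯`, that is, `[𝔰,𝔯] + [𝔯,𝔯]`.
  let W : Submodule K L :=
    (((⁅(⊤ : LieIdeal K s), (⊤ : LieSubmodule K s V)⁆).toSubmodule.comap
      (LieSubmodule.Quotient.mk' D : r →ₗ[K] V))).map r.toSubmodule.subtype
  have hW : W = r.toSubmodule ↔ ⁅(⊤ : LieIdeal K s), (⊤ : LieSubmodule K s V)⁆ = ⊤ := by
    constructor
    · intro h
      rw [eq_top_iff]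
      intro v _
      obtain ⟨x, rfl⟩ := LieSubmodule.Quotient.surjective_mk' D v
      have hx : (x : L) ∈ W := h ▸ x.2
      obtain ⟨x', hx', hxx'⟩ := hx
      rw [← Subtype.ext hxx']
      exact hx'
    · intro h
      refine le_antisymm (Submodule.map_subtype_le _ _) fun x hx ↦ ⟨⟨x, hx⟩, ?_, rfl⟩
      refine Submodule.mem_comap.mpr ?_
      rw [h]
      trivial
  have hWr : W ≤ r.toSubmodule := Submodule.map_subtype_le _ _
  have hrr : (⁅r, r⁆ : LieIdeal K L).toSubmodule ≤ W := by
    intro x hx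
    refine ⟨⟨x, LieSubmodule.lie_le_left r r hx⟩, ?_, rfl⟩
    have h0 := (hmk ⟨x, LieSubmodule.lie_le_left r r hx⟩).mpr hx
    change (LieSubmodule.Quotient.mk' D : r →ₗ[K] V) _ = 0 at h0
    exact Submodule.mem_comap.mpr (h0 ▸ zero_mem _)
  have hsr : ∀ y ∈ s, ∀ x ∈ r, ⁅y, x⁆ ∈ W := by
    intro y hy x hx
    refine ⟨(⁅y, (⟨x, hx⟩ : r)⁆ : r), ?_, rfl⟩
    exact LieSubmodule.lie_mem_lie (I := (⊤ : LieIdeal K s)) (N := (⊤ : LieSubmodule K s V))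
      (x := ⟨y, hy⟩) (m := LieSubmodule.Quotient.mk (⟨x, hx⟩ : r)) trivial trivial
  rw [htriv]
  have hgg : (⁅(⊤ : LieIdeal K L), (⊤ : LieIdeal K L)⁆).toSubmodule ≤ s.toSubmodule ⊔ W := by
    rw [LieSubmodule.lieIdeal_oper_eq_linear_span', Submodule.span_le]
    rintro _ ⟨a, -, b, -, rfl⟩
    obtain ⟨y, hy, x, hx, rfl⟩ :=
      Submodule.mem_sup.mp (h_sup ▸ trivial : a ∈ s.toSubmodule ⊔ r.toSubmodule)
    obtain ⟨y', hy', x', hx', rfl⟩ :=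
      Submodule.mem_sup.mp (h_sup ▸ trivial : b ∈ s.toSubmodule ⊔ r.toSubmodule)
    have e : ⁅y + x, y' + x'⁆ = ⁅y, y'⁆ + (⁅y, x'⁆ - ⁅y', x⁆ + ⁅x, x'⁆) := by
      rw [add_lie, lie_add, lie_add, ← lie_skew x y']; abel
    rw [e]
    exact add_mem (Submodule.mem_sup_left (s.lie_mem hy hy')) (Submodule.mem_sup_right
      (add_mem (sub_mem (hsr y hy x' hx') (hsr y' hy' x hx))
        (hrr (LieSubmodule.lie_mem_lie hx hx'))))
  have hWg : W ≤ (⁅(⊤ : LieIdeal K L), (⊤ : LieIdeal K L)⁆).toSubmodule := by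
    have hle : (⁅(⊤ : LieIdeal K s), (⊤ : LieSubmodule K s V)⁆).toSubmodule ≤
        ((⁅(⊤ : LieIdeal K L), (⊤ : LieIdeal K L)⁆).toSubmodule.comap r.toSubmodule.subtype).map
          (LieSubmodule.Quotient.mk' D : r →ₗ[K] V) := by
      rw [LieSubmodule.lieIdeal_oper_eq_linear_span', Submodule.span_le]
      rintro _ ⟨y, -, v, -, rfl⟩
      obtain ⟨x, rfl⟩ := LieSubmodule.Quotient.surjective_mk' D v
      refine ⟨(⁅(y : L), x⁆ : r), ?_, rfl⟩
      exact LieSubmodule.lie_mem_lie (x := (y : L)) (m := (x : L)) trivial trivial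
    rintro _ ⟨x, hx, rfl⟩
    obtain ⟨z, hz, hzx⟩ := hle hx
    have hxz : ((x - z : r) : L) ∈ ⁅r, r⁆ := by
      refine (hmk _).mp ?_
      change (LieSubmodule.Quotient.mk' D : r →ₗ[K] V) (x - z) = 0
      rw [map_sub, hzx, sub_self]
    have h1 := add_mem (LieSubmodule.mono_lie le_top le_top hxz :
      ((x - z : r) : L) ∈ ⁅(⊤ : LieIdeal K L), (⊤ : LieIdeal K L)⁆) hz
    simpa using h1
  have hsg : s.toSubmodule ≤ (⁅(⊤ : LieIdeal K L), (⊤ : LieIdeal K L)⁆).toSubmodule := by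
    have hc : IsCompl (LieModule.maxTrivSubmodule K s s)
        ⁅(⊤ : LieIdeal K s), (⊤ : LieSubmodule K s s)⁆ :=
      LeviPerfect.isCompl_maxTriv_lie _ s rfl
    have hz : LieModule.maxTrivSubmodule K s s = ⊥ := LieAlgebra.center_eq_bot K s
    rw [hz] at hc
    have ht := eq_top_of_bot_isCompl hc
    intro y hy
    have hy' : (⟨y, hy⟩ : s) ∈ (⁅(⊤ : LieIdeal K s), (⊤ : LieSubmodule K s s)⁆).toSubmodule := by
      rw [ht]; trivial
    rw [LieSubmodule.lieIdeal_oper_eq_linear_span'] at hy'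
    refine (Submodule.span_le (p := (⁅(⊤ : LieIdeal K L),
      (⊤ : LieIdeal K L)⁆).toSubmodule.comap s.toSubmodule.subtype)).mpr ?_ hy'
    rintro _ ⟨a, -, b, -, rfl⟩
    exact LieSubmodule.lie_mem_lie (x := (a : L)) (m := (b : L)) trivial trivial
  constructor
  · intro h
    have h1 : s.toSubmodule ⊔ W = ⊤ := by
      rw [eq_top_iff, ← LieSubmodule.top_toSubmodule (R := K) (L := L) (M := L), ← h]
      exact hgg
    have h2 : W = r.toSubmodule :=
      eq_of_le_of_inf_le_of_sup_le hWr (z := s.toSubmodule)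
        (by rw [inf_comm, h_inf]; exact bot_le) (by rw [sup_comm W, h1]; exact le_top)
    have h3 := hV.inf_eq_bot
    rwa [hW.mp h2, inf_top_eq] at h3
  · intro h
    have h3 := hV.sup_eq_top
    rw [h, bot_sup_eq] at h3
    rw [← LieSubmodule.toSubmodule_inj, LieSubmodule.top_toSubmodule, eq_top_iff, ← h_sup,
      ← hW.mpr h3]
    exact sup_le hsg hWg
end

section
/- Let j : 𝔰𝔩₂(ℂ) → 𝔰𝔩₃(ℂ) be an injective Lie algebra homomorphism. For i = 1,2,3 let cᵢ : 𝔤𝔩₃(ℂ) → ℂ³ denote the linear projection of a matrix to its i-th column and rᵢ : 𝔤𝔩₃(ℂ) → ℂ³ the projection to its i-th row. Then none of the six linear maps cᵢ ∘ j, rᵢ ∘ j : 𝔰𝔩₂(ℂ) → ℂ³ (i = 1,2,3) is bijective. -/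
/-!
Suppose `𝔰𝔩₂` acts on `V = ℂ³` by traceless operators `ρ x` and that, for some `v`, the orbit map
`φ x = ρ x v` is bijective. Choose `u` with `ρ u v = v`. Then
`ρ u (φ x) = ρ ⁅u, x⁆ v + ρ x (ρ u v) = φ (⁅u, x⁆ + x)`,
so `φ` conjugates `ad u + 1` into `ρ u`. Taking traces, `0 = tr (ρ u) = tr (ad u) + 3 = 3`, since
`tr (ad u) = 0` because `𝔰𝔩₂` is perfect. This contradiction is `orbit_map_not_bijective`. Columns are
orbit maps of basis vectors for the action through `j`; rows, up to sign, are those for the dual action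
`x ↦ -(j x)ᵀ`.
-/

open LieAlgebra LieAlgebra.SpecialLinear

attribute [local instance] LieRing.ofAssociativeRing

/-- `𝔰𝔩₂(ℂ)` is perfect, so its adjoint operators, being combinations of commutators, are
traceless. -/
lemma trace_ad_sl_two (u : sl (Fin 2) ℂ) : LinearMap.trace ℂ _ (LieAlgebra.ad ℂ _ u) = 0 := by
  have mem (A : Matrix (Fin 2) (Fin 2) ℂ) (hA : A.trace = 0) : A ∈ sl (Fin 2) ℂ := hA
  let h : sl (Fin 2) ℂ := ⟨!![1, 0; 0, -1], mem _ (by simp [Matrix.trace_fin_two])⟩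
  let e : sl (Fin 2) ℂ := ⟨!![0, 1; 0, 0], mem _ (by simp [Matrix.trace_fin_two])⟩
  let f : sl (Fin 2) ℂ := ⟨!![0, 0; 1, 0], mem _ (by simp [Matrix.trace_fin_two])⟩
  have hu : u.1 0 0 + u.1 1 1 = 0 := by
    have : u.1.trace = 0 := u.2
    rwa [Matrix.trace_fin_two] at this
  have key : u = u.1 0 0 • ⁅e, f⁆ + (u.1 0 1 / 2) • ⁅h, e⁆ + (u.1 1 0 / 2) • ⁅f, h⁆ := by
    apply Subtype.ext
    change u.1 = u.1 0 0 • ⁅e.1, f.1⁆ + (u.1 0 1 / 2) • ⁅h.1, e.1⁆ + (u.1 1 0 / 2) • ⁅f.1, h.1⁆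
    ext a b
    fin_cases a <;> fin_cases b <;> simp [h, e, f, Ring.lie_def] <;>
      first | ring1 | linear_combination hu
  have comm (x y : sl (Fin 2) ℂ) : LinearMap.trace ℂ _ (LieAlgebra.ad ℂ _ ⁅x, y⁆) = 0 := by
    rw [(LieAlgebra.ad ℂ (sl (Fin 2) ℂ)).map_lie, LinearMap.trace_lie]
  rw [key]
  simp only [map_add, map_smul, comm, smul_zero, add_zero]

lemma trace_one_sl_two_of_equiv (φ : sl (Fin 2) ℂ ≃ₗ[ℂ] (Fin 3 → ℂ)) :
    LinearMap.trace ℂ (sl (Fin 2) ℂ) 1 = 3 := by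
  rw [LinearMap.trace_one, φ.finrank_eq]
  simp

/-- No vector of a three-dimensional traceless representation of `𝔰𝔩₂(ℂ)` has a bijective orbit
map. -/
lemma orbit_map_not_bijective (ρ : sl (Fin 2) ℂ →ₗ[ℂ] Matrix (Fin 3) (Fin 3) ℂ)
    (hρ : ∀ x y, ρ ⁅x, y⁆ = ρ x * ρ y - ρ y * ρ x) (htr : ∀ x, (ρ x).trace = 0)
    (v : Fin 3 → ℂ) : ¬ Function.Bijective (fun x => (ρ x).mulVec v) := by
  intro hb
  let φ₀ : sl (Fin 2) ℂ →ₗ[ℂ] (Fin 3 → ℂ) :=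
    { toFun := fun x => (ρ x).mulVec v
      map_add' := fun x y => by simp [Matrix.add_mulVec]
      map_smul' := fun c x => by simp [Matrix.smul_mulVec] }
  let φ := LinearEquiv.ofBijective φ₀ hb
  have hφ (x) : φ x = (ρ x).mulVec v := rfl
  obtain ⟨u, hu⟩ := φ.surjective v
  rw [hφ] at hu
  have conj : Matrix.toLin' (ρ u) = φ.conj (LieAlgebra.ad ℂ _ u + 1) := by
    apply LinearMap.ext
    intro w
    obtain ⟨x, rfl⟩ := φ.surjective w
    rw [LinearEquiv.conj_apply_apply, φ.symm_apply_apply, LinearMap.add_apply, map_add,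
      LieAlgebra.ad_apply, Module.End.one_apply, Matrix.toLin'_apply, hφ, hφ, hρ,
      Matrix.sub_mulVec, ← Matrix.mulVec_mulVec, ← Matrix.mulVec_mulVec, hu, sub_add_cancel]
  have h := congrArg (LinearMap.trace ℂ _) conj
  rw [LinearMap.trace_conj', map_add, trace_ad_sl_two, trace_one_sl_two_of_equiv φ,
    Matrix.trace_toLin'_eq, htr] at h
  norm_num at h

/-- Let `j : 𝔰𝔩₂(ℂ) → 𝔰𝔩₃(ℂ)` be an injective Lie algebra homomorphism.  Then for each
`i = 1, 2, 3`, neither the composition of `j` with the projection to the `i`-th column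
nor the composition with the projection to the `i`-th row is a bijection
`𝔰𝔩₂(ℂ) → ℂ³`. -/
theorem column_row_projections_not_bijective
    (j : ↥(sl (Fin 2) ℂ) →ₗ⁅ℂ⁆ ↥(sl (Fin 3) ℂ)) (hj : Function.Injective j) (i : Fin 3) :
    ¬ Function.Bijective (fun x : ↥(sl (Fin 2) ℂ) =>
        fun k : Fin 3 => (j x : Matrix (Fin 3) (Fin 3) ℂ) k i) ∧
    ¬ Function.Bijective (fun x : ↥(sl (Fin 2) ℂ) =>
        fun k : Fin 3 => (j x : Matrix (Fin 3) (Fin 3) ℂ) i k) := by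
  let ρ : sl (Fin 2) ℂ →ₗ[ℂ] Matrix (Fin 3) (Fin 3) ℂ :=
    (sl (Fin 3) ℂ).toSubmodule.subtype ∘ₗ (j : sl (Fin 2) ℂ →ₗ[ℂ] sl (Fin 3) ℂ)
  have hρj (x) : ρ x = (j x).1 := rfl
  have hρ (x y) : ρ ⁅x, y⁆ = ρ x * ρ y - ρ y * ρ x := by
    rw [hρj, LieHom.map_lie]
    rfl
  have htr (x) : (ρ x).trace = 0 := (j x).2
  constructor
  · intro hb
    refine orbit_map_not_bijective ρ hρ htr (Pi.single i 1) ?_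
    convert hb using 2 with x
    ext k
    simp [hρj]
  · intro hb
    let τ : sl (Fin 2) ℂ →ₗ[ℂ] Matrix (Fin 3) (Fin 3) ℂ :=
      -((Matrix.transposeLinearEquiv (Fin 3) (Fin 3) ℂ ℂ).toLinearMap ∘ₗ ρ)
    have hτρ (x) : τ x = -(ρ x).transpose := rfl
    refine orbit_map_not_bijective τ (fun x y => ?_) (fun x => ?_) (Pi.single i 1) ?_
    · simp [hτρ, hρ, Matrix.transpose_mul]
    · simp [hτρ, htr]
    · convert (Equiv.neg (Fin 3 → ℂ)).bijective.comp hb using 2 with x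
      ext k
      simp [hτρ, hρj]
end

section
/- Let V be a finite-dimensional complex vector space with two Lie brackets [·,·] and {·,·}, giving Lie algebras 𝔤 = (V,[·,·]) and 𝔫 = (V,{·,·}). If 𝔤 is perfect but not semisimple and 𝔫 is isomorphic to 𝔰𝔩₃(ℂ), then there is no post-Lie algebra structure on (𝔤,𝔫). -/
/-!
The Killing form of `𝔫 ≅ 𝔰𝔩₃(ℂ)` is nondegenerate, so the derivations `y ↦ x · y` of `𝔫` are inner:
`x · y = {φ x, y}`. The post-Lie axioms say precisely that `φ` and `ψ = φ + id` are Lie algebra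
homomorphisms `𝔤 → 𝔫` (`exists_homs`). Composing with the standard representation of `𝔰𝔩₃(ℂ)`
gives two representations `φ`, `ψ` of the perfect, eight-dimensional Lie algebra `𝔤` on a
three-dimensional space `V`, with `ψ - φ` injective. It is enough to show that `𝔤` has no nonzero
abelian ideal `I` (`abelian_eq_bot`), since `𝔤` is then semisimple by the Cartan criterion.

Write `K = ker φ` and `L = ker ψ`; then `K ∩ L = 0`. Let `I` be a nonzero abelian ideal.

* Both kernels have dimension at least three (`three_le_finrank_ker`). If a representation of `𝔤`
  on `V` is reducible, it or its dual has an invariant vector, and the image lies in a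
  five-dimensional space of traceless operators. If it is irreducible, the image has dimension at
  most five or is `𝔰𝔩(V)` (`Irred.finrank_range`), and in the latter case it is faithful, which is
  impossible because an irreducible representation kills `I` (`Irred.abelian_le_ker`).
* Hence `K + L` has codimension at most two. As a perfect Lie algebra has no nonzero quotient of
  dimension at most two, `𝔤 = K ⊕ L` (`ker_sup_ker`).
* `I` does not lie in both kernels; say it does not lie in `K`. Then `φ` is reducible. Also
  `φ(𝔤) ≅ L` is perfect with a nonzero abelian ideal, hence of dimension at least five
  (`Perfect.abelian_ideal_eq_bot`), so `dim L = 5` and `dim K = 3`. Passing to the dual if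
  necessary, `φ` kills a vector `v ≠ 0`, and its image is the space of all traceless operators
  killing `v`.
* Then `k ↦ ψ k v` is a linear isomorphism from `K` to `V`. For the `e ∈ K` with `ψ e v = v`, it
  carries `ad e` on `K` to `ψ e - 1`, whose trace is `-3`, although a perfect Lie algebra acts by
  traceless operators (`false_of_invariant`).
-/

open LieAlgebra LieAlgebra.SpecialLinear

/-- A post-Lie algebra structure on a pair of Lie algebras `(𝔤, 𝔫)` sharing the same
underlying vector space.  Here the common underlying space is identified via the linear
equivalence `σ : G ≃ₗ[ℂ] N`, so that the bracket of `𝔤` is `⁅x, y⁆` in `G` and the bracket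
of `𝔫` is `σ.symm ⁅σ x, σ y⁆`, and the bilinear product is `P`. -/
structure IsPostLieStructure {G N : Type*} [LieRing G] [LieAlgebra ℂ G]
    [LieRing N] [LieAlgebra ℂ N] (σ : G ≃ₗ[ℂ] N) (P : G →ₗ[ℂ] G →ₗ[ℂ] G) : Prop where
  diff_eq : ∀ x y : G, P x y - P y x = ⁅x, y⁆ - σ.symm ⁅σ x, σ y⁆
  rep : ∀ x y z : G, P ⁅x, y⁆ z = P x (P y z) - P y (P x z)
  der : ∀ x y z : G, P x (σ.symm ⁅σ y, σ z⁆) =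
      σ.symm ⁅σ (P x y), σ z⁆ + σ.symm ⁅σ y, σ (P x z)⁆

section PostLie

set_option linter.unusedSectionVars false

attribute [local instance] LieRing.ofAssociativeRing

open Module

namespace PostLieSl3

variable {g : Type*} [LieRing g] [LieAlgebra ℂ g]

/-- Perfectness, as an elimination principle: a subspace containing all brackets is everything. -/
def Perfect (g : Type*) [LieRing g] [LieAlgebra ℂ g] : Prop :=
  ∀ Q : Submodule ℂ g, (∀ x y : g, ⁅x, y⁆ ∈ Q) → Q = ⊤

/-! ### Perfect Lie algebras of small dimension -/

lemma perfect_of_lie_top_eq_top (h : ⁅(⊤ : LieIdeal ℂ g), (⊤ : LieIdeal ℂ g)⁆ = ⊤) :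
    Perfect g := by
  intro Q hQ
  have h2 := LieSubmodule.lieIdeal_oper_eq_linear_span' (R := ℂ) (L := g) (M := g) (I := ⊤) (N := ⊤)
  rw [h] at h2
  rw [eq_top_iff, ← LieSubmodule.top_toSubmodule (R := ℂ) (L := g) (M := g), h2, Submodule.span_le]
  rintro _ ⟨x, -, y, -, rfl⟩
  exact hQ x y

lemma Perfect.of_surjective {h : Type*} [LieRing h] [LieAlgebra ℂ h] (hg : Perfect g)
    (f : g →ₗ⁅ℂ⁆ h) (hf : Function.Surjective f) : Perfect h := by
  intro Q hQ
  have h1 := hg (Q.comap (f : g →ₗ[ℂ] h)) (fun x y => by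
    simpa using hQ (f x) (f y))
  rw [eq_top_iff]
  intro y _
  obtain ⟨x, rfl⟩ := hf y
  have : x ∈ Q.comap (f : g →ₗ[ℂ] h) := by rw [h1]; trivial
  simpa using this

lemma Perfect.trace_eq_zero (hg : Perfect g) {M : Type*} [AddCommGroup M] [Module ℂ M]
    (f : g →ₗ⁅ℂ⁆ Module.End ℂ M) (x : g) : LinearMap.trace ℂ M (f x) = 0 := by
  have h := hg (LinearMap.ker (LinearMap.trace ℂ M ∘ₗ (f : g →ₗ[ℂ] Module.End ℂ M)))
    (fun x y => by simp [LinearMap.trace_lie])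
  have : x ∈ LinearMap.ker (LinearMap.trace ℂ M ∘ₗ (f : g →ₗ[ℂ] Module.End ℂ M)) := by
    rw [h]; trivial
  simpa using this

/-- If `g` is spanned by three elements modulo central elements, then the brackets of these
three elements span `[g, g] = g`. -/
lemma Perfect.span_brackets (hg : Perfect g) (J : Submodule ℂ g)
    (hJ : ∀ j ∈ J, ∀ x : g, ⁅j, x⁆ = 0) (a b c : g)
    (hspan : ∀ x : g, ∃ j ∈ J, ∃ r s t : ℂ, x = j + r • a + s • b + t • c) :
    Submodule.span ℂ {⁅a, b⁆, ⁅b, c⁆, ⁅a, c⁆} = ⊤ := by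
  refine hg _ fun x y => ?_
  obtain ⟨j, hj, r, s, t, rfl⟩ := hspan x
  obtain ⟨j', hj', r', s', t', rfl⟩ := hspan y
  have hr : ∀ x : g, ⁅x, j'⁆ = 0 := fun x => by rw [← lie_skew, hJ j' hj', neg_zero]
  have : ⁅j + r • a + s • b + t • c, j' + r' • a + s' • b + t' • c⁆
      = (r * s' - s * r') • ⁅a, b⁆ + (s * t' - t * s') • ⁅b, c⁆ + (r * t' - t * r') • ⁅a, c⁆ := by
    simp only [add_lie, lie_add, smul_lie, lie_smul, hr, hJ j hj, lie_self]
    rw [← lie_skew b a, ← lie_skew c b, ← lie_skew c a]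
    module
  rw [this]
  refine add_mem (add_mem ?_ ?_) ?_ <;> refine Submodule.smul_mem _ _ (Submodule.subset_span ?_) <;>
    simp

lemma exists_span_of_finrank_le {M : Type*} [AddCommGroup M] [Module ℂ M] [FiniteDimensional ℂ M]
    (n : ℕ) (h : finrank ℂ M ≤ n) :
    ∃ v : Fin n → M, ∀ x, ∃ r : Fin n → ℂ, x = ∑ i, r i • v i := by
  let b := Module.finBasis ℂ M
  refine ⟨fun i => if h : i.1 < finrank ℂ M then b ⟨i, h⟩ else 0, fun x =>
    ⟨fun i => if h : i.1 < finrank ℂ M then b.repr x ⟨i, h⟩ else 0, ?_⟩⟩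
  obtain ⟨k, rfl⟩ := Nat.exists_eq_add_of_le h
  rw [Fin.sum_univ_add]
  simp [b.sum_repr]

variable [FiniteDimensional ℂ g]

lemma Perfect.subsingleton_of_finrank_le_two (hg : Perfect g) (h : finrank ℂ g ≤ 2) :
    Subsingleton g := by
  have key : ∀ a b : g, (∀ x : g, ∃ r s : ℂ, x = r • a + s • b) →
      Submodule.span ℂ {⁅a, b⁆} = ⊤ := by
    intro a b hab
    have := hg.span_brackets ⊥ (by simp) a b 0 (fun x => by
      obtain ⟨r, s, hx⟩ := hab x
      exact ⟨0, by simp, r, s, 0, by simpa using hx⟩)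
    rw [eq_top_iff, ← this, Submodule.span_le]
    rintro _ (rfl | rfl | rfl) <;> simp [Submodule.mem_span_singleton_self]
  obtain ⟨v, hv⟩ := exists_span_of_finrank_le 2 h
  have h1 := key (v 0) (v 1) (fun x => by
    obtain ⟨r, hr⟩ := hv x
    exact ⟨r 0, r 1, by simpa using hr⟩)
  have h2 := key ⁅v 0, v 1⁆ 0 (fun x => by
    have hx : x ∈ Submodule.span ℂ {⁅v 0, v 1⁆} := by rw [h1]; trivial
    obtain ⟨r, rfl⟩ := Submodule.mem_span_singleton.mp hx
    exact ⟨r, 0, by simp⟩)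
  rw [lie_zero, Submodule.span_zero_singleton] at h2
  exact (Submodule.subsingleton_iff ℂ).mp (subsingleton_of_bot_eq_top h2)

lemma Perfect.eq_top_of_finrank_quotient_le_two (hg : Perfect g) (I : LieIdeal ℂ g)
    (h : finrank ℂ g ≤ finrank ℂ I + 2) : I = ⊤ := by
  let q : g →ₗ⁅ℂ⁆ g ⧸ I :=
    { (LieSubmodule.Quotient.mk' I : g →ₗ[ℂ] g ⧸ I) with
      map_lie' := fun {x y} => rfl }
  have hq : Perfect (g ⧸ I) := hg.of_surjective q (LieSubmodule.Quotient.surjective_mk' I)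
  have hdim : finrank ℂ (g ⧸ I) + finrank ℂ I = finrank ℂ g :=
    Submodule.finrank_quotient_add_finrank I.toSubmodule
  have hs : Subsingleton (g ⧸ I) := hq.subsingleton_of_finrank_le_two (by omega)
  rw [eq_top_iff]
  intro x _
  exact (LieSubmodule.Quotient.mk_eq_zero (N := I)).mp (Subsingleton.elim _ _)

/-- A perfect Lie algebra acts trivially on a line. -/
lemma Perfect.apply_eq_zero_of_line {g : Type*} [LieRing g] [LieAlgebra ℂ g] (hg : Perfect g)
    {M : Type*} [AddCommGroup M] [Module ℂ M]
    (f : g →ₗ⁅ℂ⁆ Module.End ℂ M) (v : M) (hv : ∀ x, ∃ c : ℂ, f x v = c • v) (x : g) :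
    f x v = 0 := by
  have h := hg (LinearMap.ker (LinearMap.applyₗ v ∘ₗ (f : g →ₗ[ℂ] Module.End ℂ M)))
    (fun x y => by
      obtain ⟨a, ha⟩ := hv x
      obtain ⟨b, hb⟩ := hv y
      simp [LieRing.of_associative_ring_bracket, ha, hb, smul_smul, mul_comm])
  have : x ∈ LinearMap.ker (LinearMap.applyₗ v ∘ₗ (f : g →ₗ[ℂ] Module.End ℂ M)) := by
    rw [h]; trivial
  simpa using this

/-- A nonzero abelian ideal of a perfect Lie algebra has codimension at least three, hence is here a
line. This line is central, so the brackets of three elements span the whole Lie algebra, which has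
dimension at least four. -/
lemma Perfect.abelian_ideal_eq_bot (hg : Perfect g) (h4 : finrank ℂ g ≤ 4) (I : LieIdeal ℂ g)
    (hI : ∀ x ∈ I, ∀ y ∈ I, ⁅x, y⁆ = 0) : I = ⊥ := by
  by_cases h2 : finrank ℂ g ≤ finrank ℂ I + 2
  · have := hg.eq_top_of_finrank_quotient_le_two I h2
    subst this
    have h0 : (⊥ : Submodule ℂ g) = ⊤ := hg ⊥ (fun x y => by simpa using hI x trivial y trivial)
    rw [← LieSubmodule.toSubmodule_inj]
    simpa using h0.symm
  by_contra hne
  have hpos : 0 < finrank ℂ I := by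
    have : Nontrivial I := (LieSubmodule.nontrivial_iff_ne_bot ℂ g g).mpr hne
    exact finrank_pos
  have h1 : finrank ℂ I = 1 := by omega
  obtain ⟨⟨j, hjI⟩, hj0, hj⟩ := finrank_eq_one_iff'.mp h1
  have hline : ∀ y ∈ I, ∃ c : ℂ, y = c • j := fun y hy => by
    obtain ⟨c, hc⟩ := hj ⟨y, hy⟩
    exact ⟨c, (congrArg Subtype.val hc).symm⟩
  have hcent : ∀ x : g, ⁅x, j⁆ = 0 := fun x =>
    hg.apply_eq_zero_of_line (LieAlgebra.ad ℂ g) j (fun x => hline _ (lie_mem_right ℂ g I x j hjI)) x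
  have hdim : finrank ℂ (g ⧸ I.toSubmodule) + finrank ℂ I = finrank ℂ g :=
    Submodule.finrank_quotient_add_finrank I.toSubmodule
  obtain ⟨v, hv⟩ := exists_span_of_finrank_le (M := g ⧸ I.toSubmodule) 3 (by omega)
  choose w hw using fun i => Submodule.Quotient.mk_surjective I.toSubmodule (v i)
  have hspan := hg.span_brackets I.toSubmodule (fun y hy x => by
      obtain ⟨c, rfl⟩ := hline y hy
      rw [smul_lie, ← lie_skew, hcent, neg_zero, smul_zero]) (w 0) (w 1) (w 2) (fun x => by
      obtain ⟨r, hr⟩ := hv (Submodule.Quotient.mk x)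
      refine ⟨x - (r 0 • w 0 + r 1 • w 1 + r 2 • w 2), ?_, r 0, r 1, r 2, by abel⟩
      rw [← Submodule.Quotient.mk_eq_zero]
      simp [hr, hw, Fin.sum_univ_three])
  have hle : finrank ℂ g ≤ 3 := by
    rw [← finrank_top ℂ g, ← hspan]
    have hr : Set.range (![⁅w 0, w 1⁆, ⁅w 1, w 2⁆, ⁅w 0, w 2⁆] : Fin 3 → g)
        = {⁅w 0, w 1⁆, ⁅w 1, w 2⁆, ⁅w 0, w 2⁆} := by
      ext
      simp only [Matrix.range_cons, Matrix.range_empty, Set.mem_union, Set.mem_singleton_iff,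
        Set.mem_insert_iff, Set.mem_empty_iff_false, or_false]
    have h3 := finrank_range_le_card (R := ℂ) (![⁅w 0, w 1⁆, ⁅w 1, w 2⁆, ⁅w 0, w 2⁆] : Fin 3 → g)
    rwa [Set.finrank, Fintype.card_fin, hr] at h3
  omega

/-! ### Representations on a three-dimensional space -/

variable {V : Type*} [AddCommGroup V] [Module ℂ V] [FiniteDimensional ℂ V]

/-- The subspace of traceless endomorphisms annihilating `v`. -/
noncomputable def annSl (v : V) : Submodule ℂ (Module.End ℂ V) :=
  LinearMap.ker (LinearMap.prod (LinearMap.applyₗ v) (LinearMap.trace ℂ V))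

lemma mem_annSl {v : V} {x : Module.End ℂ V} :
    x ∈ annSl v ↔ x v = 0 ∧ LinearMap.trace ℂ V x = 0 := by
  simp [annSl]

lemma exists_end_apply_eq_trace_eq (hV : finrank ℂ V = 3) {v : V} (hv : v ≠ 0) (u : V) (t : ℂ) :
    ∃ x : Module.End ℂ V, x v = u ∧ LinearMap.trace ℂ V x = t := by
  obtain ⟨l, hl⟩ := Module.Projective.exists_dual_eq_one ℂ hv
  refine ⟨l.smulRight u + ((t - l u) / 2) • (1 - l.smulRight v), ?_, ?_⟩
  · simp [hl]
  · simp only [map_add, map_smul, map_sub, LinearMap.trace_smulRight, hl, LinearMap.trace_one, hV,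
      smul_eq_mul]
    push_cast
    ring

lemma finrank_annSl (hV : finrank ℂ V = 3) {v : V} (hv : v ≠ 0) : finrank ℂ (annSl v) = 5 := by
  have hs : LinearMap.range (LinearMap.prod (LinearMap.applyₗ v) (LinearMap.trace ℂ V)) = ⊤ := by
    rw [LinearMap.range_eq_top]
    rintro ⟨u, t⟩
    obtain ⟨x, h1, h2⟩ := exists_end_apply_eq_trace_eq hV hv u t
    exact ⟨x, by simp [h1, h2]⟩
  have h := LinearMap.finrank_range_add_finrank_ker
    (LinearMap.prod (LinearMap.applyₗ (R := ℂ) v) (LinearMap.trace ℂ V))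
  rw [hs, finrank_top, Module.finrank_prod, Module.finrank_linearMap, hV, Module.finrank_self] at h
  change 3 + 1 + finrank ℂ (annSl v) = 3 * 3 at h
  omega

/-- Irreducibility of the representation `f`, in terms of plain subspaces. -/
def Irred (f : g →ₗ⁅ℂ⁆ Module.End ℂ V) : Prop :=
  ∀ U : Submodule ℂ V, (∀ x, ∀ u ∈ U, f x u ∈ U) → U = ⊥ ∨ U = ⊤

/-- The contragredient representation `x ↦ -(f x)ᵀ` on the dual space. -/
def dualRep (f : g →ₗ⁅ℂ⁆ Module.End ℂ V) : g →ₗ⁅ℂ⁆ Module.End ℂ (Module.Dual ℂ V) :=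
  { -(Module.Dual.transpose (R := ℂ) (M := V) (M' := V) ∘ₗ (f : g →ₗ[ℂ] Module.End ℂ V)) with
    map_lie' := fun {x y} => by
      ext l u
      simp [LieRing.of_associative_ring_bracket, Module.Dual.transpose_apply] }

lemma dualRep_apply (f : g →ₗ⁅ℂ⁆ Module.End ℂ V) (x : g) (l : Module.Dual ℂ V) (u : V) :
    dualRep f x l u = - l (f x u) := by
  rfl

lemma dualRep_eq_zero_iff (f : g →ₗ⁅ℂ⁆ Module.End ℂ V) (x : g) : dualRep f x = 0 ↔ f x = 0 := by
  constructor
  · intro h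
    ext u
    refine (Module.forall_dual_apply_eq_zero_iff ℂ _).mp fun l => ?_
    have := dualRep_apply f x l u
    simpa [h] using this.symm
  · intro h
    ext l u
    simp [dualRep_apply, h]

lemma dualRep_ker (f : g →ₗ⁅ℂ⁆ Module.End ℂ V) : (dualRep f).ker = f.ker := by
  ext x
  simp [LieHom.mem_ker, dualRep_eq_zero_iff]

/-- A stable line or plane of a perfect Lie algebra yields an invariant vector in the
representation or in its dual. -/
lemma Perfect.irred_or_invariant (hg : Perfect g) (hV : finrank ℂ V = 3)
    (f : g →ₗ⁅ℂ⁆ Module.End ℂ V) :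
    Irred f ∨ (∃ v : V, v ≠ 0 ∧ ∀ x, f x v = 0) ∨
      (∃ l : Module.Dual ℂ V, l ≠ 0 ∧ ∀ x, dualRep f x l = 0) := by
  have aux : ∀ {M : Type _} [AddCommGroup M] [Module ℂ M] (f : g →ₗ⁅ℂ⁆ Module.End ℂ M)
      (U : Submodule ℂ M), finrank ℂ U = 1 → (∀ x, ∀ u ∈ U, f x u ∈ U) →
      ∃ v : M, v ≠ 0 ∧ ∀ x, f x v = 0 := by
    intro M _ _ f U hU hst
    obtain ⟨⟨v, hvU⟩, hv0, hv⟩ := finrank_eq_one_iff'.mp hU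
    refine ⟨v, fun h => hv0 (by simp [h]), hg.apply_eq_zero_of_line f v fun x => ?_⟩
    obtain ⟨c, hc⟩ := hv ⟨_, hst x v hvU⟩
    exact ⟨c, (congrArg Subtype.val hc).symm⟩
  by_cases hf : Irred f
  · exact Or.inl hf
  right
  simp only [Irred, not_forall, not_or] at hf
  obtain ⟨U, hst, hbot, htop⟩ := hf
  have h0 : finrank ℂ U ≠ 0 := fun h => hbot (Submodule.finrank_eq_zero.mp h)
  have h3 : finrank ℂ U < 3 := hV ▸ Submodule.finrank_lt htop
  obtain h | h : finrank ℂ U = 1 ∨ finrank ℂ U = 2 := by omega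
  · exact Or.inl (aux f U h hst)
  · right
    have hd := Subspace.finrank_add_finrank_dualAnnihilator_eq U
    refine aux (dualRep f) U.dualAnnihilator (by omega) fun x l hl => ?_
    rw [Submodule.mem_dualAnnihilator] at hl ⊢
    intro u hu
    rw [dualRep_apply, hl _ (hst x u hu), neg_zero]

lemma Perfect.range_le_annSl (hg : Perfect g) (f : g →ₗ⁅ℂ⁆ Module.End ℂ V) {v : V}
    (hv : ∀ x, f x v = 0) : LinearMap.range (f : g →ₗ[ℂ] Module.End ℂ V) ≤ annSl v := by
  rintro _ ⟨x, rfl⟩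
  exact mem_annSl.mpr ⟨hv x, hg.trace_eq_zero f x⟩

/-- In an irreducible representation `f`, a commutative space of traceless operators normalised by
the image of `f` vanishes: it would be an abelian ideal in a Lie algebra acting faithfully,
irreducibly and tracelessly. -/
lemma Irred.eq_bot_of_commute [Nontrivial V] {f : g →ₗ⁅ℂ⁆ Module.End ℂ V} (hf : Irred f)
    (hft : ∀ x, LinearMap.trace ℂ V (f x) = 0) (W : Submodule ℂ (Module.End ℂ V))
    (hW : ∀ w ∈ W, ∀ w' ∈ W, ⁅w, w'⁆ = 0) (hfW : ∀ x, ∀ w ∈ W, ⁅f x, w⁆ ∈ W)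
    (htr : ∀ w ∈ W, LinearMap.trace ℂ V w = 0) : W = ⊥ := by
  let T : LieSubalgebra ℂ (Module.End ℂ V) :=
    { LinearMap.range (f : g →ₗ[ℂ] Module.End ℂ V) ⊔ W with
      lie_mem' := by
        intro a b ha hb
        change a ∈ LinearMap.range (f : g →ₗ[ℂ] Module.End ℂ V) ⊔ W at ha
        change b ∈ LinearMap.range (f : g →ₗ[ℂ] Module.End ℂ V) ⊔ W at hb
        change ⁅a, b⁆ ∈ LinearMap.range (f : g →ₗ[ℂ] Module.End ℂ V) ⊔ W
        obtain ⟨_, ⟨x, rfl⟩, w, hw, rfl⟩ := Submodule.mem_sup.mp ha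
        obtain ⟨_, ⟨y, rfl⟩, w', hw', rfl⟩ := Submodule.mem_sup.mp hb
        refine Submodule.mem_sup.mpr ⟨f ⁅x, y⁆, ⟨_, rfl⟩, ⁅f x, w'⁆ - ⁅f y, w⁆,
          sub_mem (hfW _ _ hw') (hfW _ _ hw), ?_⟩
        simp only [LieHom.coe_toLinearMap, LieHom.map_lie, add_lie, lie_add, hW w hw w' hw']
        rw [← lie_skew w (f y)]
        abel }
  have hT : ∀ {a}, a ∈ T ↔ a ∈ LinearMap.range (f : g →ₗ[ℂ] Module.End ℂ V) ⊔ W := Iff.rfl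
  have hfT : ∀ x, f x ∈ T := fun x => hT.mpr (Submodule.mem_sup_left ⟨x, rfl⟩)
  have hWT : ∀ w ∈ W, w ∈ T := fun w hw => hT.mpr (Submodule.mem_sup_right hw)
  have hirr : LieModule.IsIrreducible ℂ T V := LieModule.IsIrreducible.mk fun N hN => by
    rw [← LieSubmodule.toSubmodule_eq_top]
    refine (hf N.toSubmodule fun x u hu => ?_).resolve_left
      (fun h => hN ((LieSubmodule.toSubmodule_eq_bot N).mp h))
    exact N.lie_mem (x := ⟨f x, hfT x⟩) hu
  have hrad : LieAlgebra.HasTrivialRadical ℂ T := by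
    refine LieAlgebra.hasTrivialRadical_of_isIrreducible_of_isFaithful ℂ T V ?_
    rintro ⟨a, ha⟩
    obtain ⟨_, ⟨x, rfl⟩, w, hw, rfl⟩ := Submodule.mem_sup.mp (hT.mp ha)
    have : LieModule.toEnd ℂ T V ⟨f x + w, ha⟩ = f x + w := by ext; rfl
    erw [this]
    rw [map_add, hft, htr w hw, add_zero]
  let J : LieIdeal ℂ T :=
    { W.comap T.toSubmodule.subtype with
      lie_mem := by
        rintro ⟨a, ha⟩ ⟨b, hb'⟩ hb
        change b ∈ W at hb
        change ⁅a, b⁆ ∈ W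
        obtain ⟨_, ⟨x, rfl⟩, w, hw, rfl⟩ := Submodule.mem_sup.mp (hT.mp ha)
        rw [add_lie, hW w hw b hb, add_zero]
        exact hfW x b hb }
  have hJ : J = ⊥ := by
    refine (LieAlgebra.hasTrivialRadical_iff_no_abelian_ideals ℂ T).mp hrad J ⟨?_⟩
    rintro ⟨⟨a, ha⟩, haJ⟩ ⟨⟨b, hb⟩, hbJ⟩
    apply Subtype.ext
    apply Subtype.ext
    exact hW a haJ b hbJ
  rw [eq_bot_iff]
  intro w hw
  have : (⟨w, hWT w hw⟩ : T) ∈ J := hw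
  rw [hJ, LieSubmodule.mem_bot] at this
  exact congrArg Subtype.val this

lemma finrank_range_add_finrank_ker (f : g →ₗ⁅ℂ⁆ Module.End ℂ V) :
    finrank ℂ (LinearMap.range (f : g →ₗ[ℂ] Module.End ℂ V)) + finrank ℂ f.ker = finrank ℂ g :=
  LinearMap.finrank_range_add_finrank_ker (f : g →ₗ[ℂ] Module.End ℂ V)

lemma eq_zero_of_trace_mul_eq_zero {x : Module.End ℂ V}
    (h : ∀ y, LinearMap.trace ℂ V (x * y) = 0) : x = 0 := by
  ext u
  refine (Module.forall_dual_apply_eq_zero_iff ℂ _).mp fun l => ?_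
  have h1 : x * l.smulRight u = l.smulRight (x u) := by ext; simp
  simpa [h1, LinearMap.trace_smulRight] using h (l.smulRight u)

/-- The image of an irreducible representation of a perfect Lie algebra on a three-dimensional
space is `𝔰𝔩(V)` unless it has dimension at most five: otherwise its trace-orthogonal complement
`W` in `𝔰𝔩(V)` has dimension one or two, so that first `[W, W]` and then `W` itself is commutative,
contradicting `Irred.eq_bot_of_commute`. -/
lemma Irred.finrank_range {f : g →ₗ⁅ℂ⁆ Module.End ℂ V} (hf : Irred f) (hg : Perfect g)
    (hV : finrank ℂ V = 3) :
    finrank ℂ (LinearMap.range (f : g →ₗ[ℂ] Module.End ℂ V)) ≤ 5 ∨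
      8 ≤ finrank ℂ (LinearMap.range (f : g →ₗ[ℂ] Module.End ℂ V)) := by
  have hnt : Nontrivial V := Module.nontrivial_of_finrank_pos (R := ℂ) (by omega)
  have hft := hg.trace_eq_zero f
  set S := LinearMap.range (f : g →ₗ[ℂ] Module.End ℂ V) with hS
  by_contra! hcon
  let B : LinearMap.BilinForm ℂ (Module.End ℂ V) :=
    (LinearMap.mul ℂ (Module.End ℂ V)).compr₂ (LinearMap.trace ℂ V)
  have hB : ∀ x y, B x y = LinearMap.trace ℂ V (x * y) := fun x y => rfl
  have hker : LinearMap.ker B = ⊥ := by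
    rw [LinearMap.ker_eq_bot']
    intro x hx
    exact eq_zero_of_trace_mul_eq_zero fun y => by rw [← hB, hx]; rfl
  have h1 : finrank ℂ (S ⊔ Submodule.span ℂ {1} : Submodule ℂ (Module.End ℂ V))
      = finrank ℂ S + 1 := by
    have hdisj : Disjoint S (Submodule.span ℂ {1}) := by
      rw [Submodule.disjoint_def]
      rintro _ ⟨x, rfl⟩ hx
      obtain ⟨c, hc⟩ := Submodule.mem_span_singleton.mp hx
      have := hft x
      rw [← LieHom.coe_toLinearMap, ← hc, map_smul, LinearMap.trace_one, hV] at this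
      have hc0 : c = 0 := by simpa using this
      rw [← hc, hc0, zero_smul]
    have := Submodule.finrank_sup_add_finrank_inf_eq S (Submodule.span ℂ {1})
    rwa [hdisj.eq_bot, finrank_bot, finrank_span_singleton one_ne_zero, add_zero] at this
  set W := B.orthogonal (S ⊔ Submodule.span ℂ {1}) with hW
  have hdim := LinearMap.BilinForm.finrank_add_finrank_orthogonal' (B := B)
    (S ⊔ Submodule.span ℂ {1})
  rw [hker, inf_bot_eq, finrank_bot, h1, Module.finrank_linearMap, hV, ← hW] at hdim
  have hmem : ∀ {w}, w ∈ W ↔ (∀ x, LinearMap.trace ℂ V (f x * w) = 0) ∧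
      LinearMap.trace ℂ V w = 0 := by
    intro w
    rw [hW, LinearMap.BilinForm.mem_orthogonal_iff]
    constructor
    · intro h
      refine ⟨fun x => h _ (Submodule.mem_sup_left ⟨x, rfl⟩), ?_⟩
      simpa [hB] using
        h 1 (Submodule.mem_sup_right (Submodule.mem_span_singleton_self _))
    · rintro ⟨h, h'⟩ n hn
      obtain ⟨_, ⟨x, rfl⟩, z, hz, rfl⟩ := Submodule.mem_sup.mp hn
      obtain ⟨c, rfl⟩ := Submodule.mem_span_singleton.mp hz
      change B _ _ = 0
      rw [hB]
      simp [add_mul, h, h']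
  have hfW : ∀ x, ∀ w ∈ W, ⁅f x, w⁆ ∈ W := by
    intro x w hw
    refine hmem.mpr ⟨fun y => ?_, LinearMap.trace_lie _ _⟩
    have h2 := (hmem.mp hw).1 ⁅y, x⁆
    rw [LieHom.map_lie, LieRing.of_associative_ring_bracket, sub_mul, map_sub] at h2
    rw [LieRing.of_associative_ring_bracket, mul_sub, map_sub, ← mul_assoc, ← mul_assoc,
      LinearMap.trace_mul_comm ℂ (f y * w) (f x), ← mul_assoc]
    exact h2
  obtain ⟨b, hb⟩ := exists_span_of_finrank_le (M := W) 2 (by omega)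
  have hWW : ∀ w ∈ W, ∀ w' ∈ W, ∃ c : ℂ, ⁅w, w'⁆ = c • ⁅(b 0).1, (b 1).1⁆ := by
    intro w hw w' hw'
    obtain ⟨r, hr⟩ := hb ⟨w, hw⟩
    obtain ⟨s, hs⟩ := hb ⟨w', hw'⟩
    have hr' : w = r 0 • (b 0).1 + r 1 • (b 1).1 := by
      simpa [Fin.sum_univ_two] using congrArg Subtype.val hr
    have hs' : w' = s 0 • (b 0).1 + s 1 • (b 1).1 := by
      simpa [Fin.sum_univ_two] using congrArg Subtype.val hs
    refine ⟨r 0 * s 1 - r 1 * s 0, ?_⟩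
    rw [hr', hs']
    simp only [add_lie, lie_add, smul_lie, lie_smul, lie_self]
    rw [← lie_skew (b 1).1 (b 0).1]
    module
  have hc0 : ⁅(b 0).1, (b 1).1⁆ = 0 := by
    have := hf.eq_bot_of_commute hft (Submodule.span ℂ {⁅(b 0).1, (b 1).1⁆}) ?_ ?_ ?_
    · simpa using this
    · intro w hw w' hw'
      obtain ⟨c, rfl⟩ := Submodule.mem_span_singleton.mp hw
      obtain ⟨c', rfl⟩ := Submodule.mem_span_singleton.mp hw'
      simp
    · intro x w hw
      obtain ⟨c, rfl⟩ := Submodule.mem_span_singleton.mp hw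
      rw [lie_smul, leibniz_lie]
      obtain ⟨c₁, h₁⟩ := hWW _ (hfW x _ (b 0).2) _ (b 1).2
      obtain ⟨c₂, h₂⟩ := hWW _ (b 0).2 _ (hfW x _ (b 1).2)
      rw [h₁, h₂, ← add_smul, smul_smul]
      exact Submodule.smul_mem _ _ (Submodule.mem_span_singleton_self _)
    · intro w hw
      obtain ⟨c, rfl⟩ := Submodule.mem_span_singleton.mp hw
      rw [map_smul, LinearMap.trace_lie, smul_zero]
  have hW0 : W = ⊥ := by
    refine hf.eq_bot_of_commute hft W (fun w hw w' hw' => ?_) hfW fun w hw => (hmem.mp hw).2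
    obtain ⟨c, hc⟩ := hWW w hw w' hw'
    rw [hc, hc0, smul_zero]
  rw [hW0, finrank_bot] at hdim
  omega

/-- An irreducible representation of a perfect Lie algebra kills every abelian ideal. -/
lemma Irred.abelian_le_ker {f : g →ₗ⁅ℂ⁆ Module.End ℂ V} (hf : Irred f) (hg : Perfect g)
    [Nontrivial V] (I : LieIdeal ℂ g) (hI : ∀ x ∈ I, ∀ y ∈ I, ⁅x, y⁆ = 0) : I ≤ f.ker := by
  have h := hf.eq_bot_of_commute (hg.trace_eq_zero f)
    (I.toSubmodule.map (f : g →ₗ[ℂ] Module.End ℂ V)) ?_ ?_ ?_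
  · intro x hx
    rw [LieHom.mem_ker]
    have : f x ∈ I.toSubmodule.map (f : g →ₗ[ℂ] Module.End ℂ V) := ⟨x, hx, rfl⟩
    rwa [h, Submodule.mem_bot] at this
  · rintro _ ⟨x, hx, rfl⟩ _ ⟨y, hy, rfl⟩
    rw [LieHom.coe_toLinearMap, ← LieHom.map_lie, hI x hx y hy, map_zero]
  · rintro x _ ⟨y, hy, rfl⟩
    exact ⟨⁅x, y⁆, lie_mem_right ℂ g I x y hy, by simp⟩
  · rintro _ ⟨x, hx, rfl⟩
    exact hg.trace_eq_zero f x

lemma three_le_finrank_ker (hg : Perfect g) (h8 : finrank ℂ g = 8) (hV : finrank ℂ V = 3)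
    (f : g →ₗ⁅ℂ⁆ Module.End ℂ V) (I : LieIdeal ℂ g) (hI : ∀ x ∈ I, ∀ y ∈ I, ⁅x, y⁆ = 0)
    (hI0 : I ≠ ⊥) : 3 ≤ finrank ℂ f.ker := by
  have hnt : Nontrivial V := Module.nontrivial_of_finrank_pos (R := ℂ) (by omega)
  have hr := finrank_range_add_finrank_ker f
  obtain hf | ⟨v, hv0, hv⟩ | ⟨l, hl0, hl⟩ := hg.irred_or_invariant hV f
  · obtain h | h := hf.finrank_range hg hV
    · omega
    · have h0 : finrank ℂ f.ker.toSubmodule = 0 := by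
        change finrank ℂ f.ker = 0
        omega
      have hk : f.ker = ⊥ :=
        (LieSubmodule.toSubmodule_eq_bot _).mp (Submodule.finrank_eq_zero.mp h0)
      exact (hI0 (le_bot_iff.mp (hk ▸ hf.abelian_le_ker hg I hI))).elim
  · have := Submodule.finrank_mono (hg.range_le_annSl f hv)
    rw [finrank_annSl hV hv0] at this
    omega
  · have := Submodule.finrank_mono (hg.range_le_annSl (dualRep f) hl)
    rw [finrank_annSl (by rw [Subspace.dual_finrank_eq, hV]) hl0] at this
    have hr' := finrank_range_add_finrank_ker (dualRep f)
    rw [dualRep_ker] at hr'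
    omega

/-! ### The case of an invariant vector -/

/-- Suppose `φ` kills a vector `v ≠ 0` and has a three-dimensional kernel `K`, so that its image is
all of `annSl v`. Then `k ↦ ψ k v` is an isomorphism `K → V`, which transports `ad e` to
`ψ e - 1` for the element `e` of `K` with `ψ e v = v`. The former has trace `0` and the latter
has trace `-3`. -/
lemma false_of_invariant (hg : Perfect g) (h8 : finrank ℂ g = 8) (hV : finrank ℂ V = 3)
    (φ ψ : g →ₗ⁅ℂ⁆ Module.End ℂ V) (hinj : ∀ x, ψ x = φ x → x = 0)
    (hsup : ∀ x, ∃ l, ψ l = 0 ∧ φ l = φ x) (hk : finrank ℂ φ.ker = 3)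
    {v : V} (hv0 : v ≠ 0) (hv : ∀ x, φ x v = 0) : False := by
  have hrange : LinearMap.range (φ : g →ₗ[ℂ] Module.End ℂ V) = annSl v := by
    refine Submodule.eq_of_le_of_finrank_eq (hg.range_le_annSl φ hv) ?_
    have := finrank_range_add_finrank_ker φ
    rw [finrank_annSl hV hv0]
    omega
  let ev : φ.ker →ₗ[ℂ] V :=
    LinearMap.applyₗ v ∘ₗ (ψ : g →ₗ[ℂ] Module.End ℂ V) ∘ₗ φ.ker.toSubmodule.subtype
  have hev : ∀ k : φ.ker, ev k = ψ k.1 v := fun k => rfl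
  have hevinj : Function.Injective ev := by
    rw [injective_iff_map_eq_zero]
    rintro ⟨k, hk⟩ h
    rw [hev] at h
    rw [LieHom.mem_ker] at hk
    have h1 : ψ k ∈ LinearMap.range (φ : g →ₗ[ℂ] Module.End ℂ V) := by
      rw [hrange]
      exact mem_annSl.mpr ⟨h, hg.trace_eq_zero ψ k⟩
    obtain ⟨x, hx⟩ := h1
    obtain ⟨l, hl, hl'⟩ := hsup x
    have hx' : φ l = ψ k := by rw [hl', ← hx]; rfl
    have h2 := hinj (k + l) (by rw [map_add, map_add, hl, hk, hx', add_zero, zero_add])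
    have h3 : ψ k = 0 := by
      rw [eq_neg_of_add_eq_zero_left h2, map_neg, hl, neg_zero]
    exact Subtype.ext (hinj k (by rw [h3, hk]))
  let E : φ.ker ≃ₗ[ℂ] V := LinearEquiv.ofInjectiveOfFinrankEq ev hevinj (by rw [hV]; exact hk)
  have hE : ∀ k : φ.ker, E k = ψ k.1 v := fun k => rfl
  obtain ⟨e, he⟩ := E.surjective v
  rw [hE] at he
  have h1 : E.conj (LieModule.toEnd ℂ g φ.ker e.1) = ψ e.1 - 1 := by
    ext u
    obtain ⟨k, rfl⟩ := E.surjective u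
    rw [LinearEquiv.conj_apply_apply, E.symm_apply_apply, hE, hE, LieModule.toEnd_apply_apply,
      LieSubmodule.coe_bracket, LieHom.map_lie, LieRing.of_associative_ring_bracket]
    simp [he]
  have h2 := hg.trace_eq_zero (LieModule.toEnd ℂ g φ.ker) e.1
  rw [← LinearMap.trace_conj' _ E, h1, map_sub, hg.trace_eq_zero ψ, LinearMap.trace_one, hV] at h2
  norm_num at h2

/-! ### Pairs of representations with injective difference -/

/-- The image under `φ` of an abelian ideal is an abelian ideal of the image of `φ`, so
`Perfect.abelian_ideal_eq_bot` applies to it. -/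
lemma abelian_le_ker_of_finrank_range_le (hg : Perfect g) (φ : g →ₗ⁅ℂ⁆ Module.End ℂ V)
    (h4 : finrank ℂ (LinearMap.range (φ : g →ₗ[ℂ] Module.End ℂ V)) ≤ 4)
    (I : LieIdeal ℂ g) (hI : ∀ x ∈ I, ∀ y ∈ I, ⁅x, y⁆ = 0) : I ≤ φ.ker := by
  have hs := LieHom.surjective_rangeRestrict φ
  have hp : Perfect φ.range := hg.of_surjective φ.rangeRestrict hs
  have h4' : finrank ℂ φ.range ≤ 4 := h4
  let J : LieIdeal ℂ φ.range :=
    { I.toSubmodule.map (φ.rangeRestrict : g →ₗ[ℂ] φ.range) with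
      lie_mem := by
        rintro x _ ⟨y, hy, rfl⟩
        obtain ⟨x, rfl⟩ := hs x
        exact ⟨⁅x, y⁆, lie_mem_right ℂ g I x y hy, by simp⟩ }
  have hJ : J = ⊥ := by
    refine hp.abelian_ideal_eq_bot h4' J ?_
    rintro _ ⟨x, hx, rfl⟩ _ ⟨y, hy, rfl⟩
    rw [LieHom.coe_toLinearMap, ← LieHom.map_lie, hI x hx y hy, map_zero]
  intro x hx
  have hx' : φ.rangeRestrict x ∈ J := ⟨x, hx, rfl⟩
  rw [hJ, LieSubmodule.mem_bot] at hx'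
  rw [LieHom.mem_ker]
  exact congrArg Subtype.val hx'

/-- Each kernel has dimension at least three and they meet trivially, so their sum has
codimension at most two and is everything. -/
lemma ker_sup_ker (hg : Perfect g) (h8 : finrank ℂ g = 8) (hV : finrank ℂ V = 3)
    (φ ψ : g →ₗ⁅ℂ⁆ Module.End ℂ V) (hinj : ∀ x, ψ x = φ x → x = 0)
    (I : LieIdeal ℂ g) (hI : ∀ x ∈ I, ∀ y ∈ I, ⁅x, y⁆ = 0) (hI0 : I ≠ ⊥) :
    φ.ker ⊔ ψ.ker = ⊤ ∧ finrank ℂ φ.ker + finrank ℂ ψ.ker = 8 := by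
  have hk := three_le_finrank_ker hg h8 hV φ I hI hI0
  have hl := three_le_finrank_ker hg h8 hV ψ I hI hI0
  have hdisj : φ.ker.toSubmodule ⊓ ψ.ker.toSubmodule = ⊥ := by
    rw [eq_bot_iff]
    rintro x ⟨h1, h2⟩
    have h1' : φ x = 0 := LieHom.mem_ker.mp h1
    have h2' : ψ x = 0 := LieHom.mem_ker.mp h2
    exact hinj x (by rw [h1', h2'])
  have hsum := Submodule.finrank_sup_add_finrank_inf_eq φ.ker.toSubmodule ψ.ker.toSubmodule
  rw [hdisj, finrank_bot, add_zero, ← LieSubmodule.sup_toSubmodule] at hsum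
  have hsum' : finrank ℂ ↥(φ.ker ⊔ ψ.ker) = finrank ℂ φ.ker + finrank ℂ ψ.ker := hsum
  have htop := hg.eq_top_of_finrank_quotient_le_two (φ.ker ⊔ ψ.ker) (by omega)
  refine ⟨htop, ?_⟩
  rw [← hsum', htop, ← h8]
  exact finrank_top ℂ g

/-- If `I` were not contained in `ker φ`, then `ker φ` would have dimension three and `φ` would be
reducible, so that `false_of_invariant` would apply to `φ`, `ψ` or to their duals. -/
lemma abelian_le_ker (hg : Perfect g) (h8 : finrank ℂ g = 8) (hV : finrank ℂ V = 3)
    (φ ψ : g →ₗ⁅ℂ⁆ Module.End ℂ V) (hinj : ∀ x, ψ x = φ x → x = 0)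
    (I : LieIdeal ℂ g) (hI : ∀ x ∈ I, ∀ y ∈ I, ⁅x, y⁆ = 0) (hI0 : I ≠ ⊥) : I ≤ φ.ker := by
  have hnt : Nontrivial V := Module.nontrivial_of_finrank_pos (R := ℂ) (by omega)
  obtain ⟨htop, hsum⟩ := ker_sup_ker hg h8 hV φ ψ hinj I hI hI0
  have hl := three_le_finrank_ker hg h8 hV ψ I hI hI0
  have hk := three_le_finrank_ker hg h8 hV φ I hI hI0
  have hr := finrank_range_add_finrank_ker φ
  by_contra hnot
  have hk3 : finrank ℂ φ.ker = 3 := by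
    by_contra hne
    exact hnot (abelian_le_ker_of_finrank_range_le hg φ (by omega) I hI)
  have hsup : ∀ x, ∃ l, ψ l = 0 ∧ φ l = φ x := by
    intro x
    have hx : x ∈ φ.ker ⊔ ψ.ker := by rw [htop]; trivial
    obtain ⟨k, hk, l, hl, rfl⟩ := LieSubmodule.mem_sup _ _ _ |>.mp hx
    rw [LieHom.mem_ker] at hk hl
    exact ⟨l, hl, by rw [map_add, hk, zero_add]⟩
  obtain hf | ⟨v, hv0, hv⟩ | ⟨l, hl0, hl⟩ := hg.irred_or_invariant hV φ
  · exact hnot (hf.abelian_le_ker hg I hI)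
  · exact false_of_invariant hg h8 hV φ ψ hinj hsup hk3 hv0 hv
  · have hdiff : ∀ x y, dualRep ψ x = dualRep φ y ↔ ψ x = φ y := by
      intro x y
      constructor
      · intro h
        ext u
        rw [← sub_eq_zero]
        refine (Module.forall_dual_apply_eq_zero_iff ℂ _).mp fun m => ?_
        have h1 := dualRep_apply ψ x m u
        rw [h, dualRep_apply] at h1
        rw [map_sub, sub_eq_zero]
        exact (neg_injective h1).symm
      · intro h
        ext m u
        rw [dualRep_apply, dualRep_apply, h]
    refine false_of_invariant hg h8 (by rw [Subspace.dual_finrank_eq, hV]) (dualRep φ) (dualRep ψ)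
      (fun x hx => hinj x ((hdiff x x).mp hx)) (fun x => ?_) (by rw [dualRep_ker, hk3]) hl0 hl
    obtain ⟨l, h1, h2⟩ := hsup x
    refine ⟨l, (dualRep_eq_zero_iff ψ l).mpr h1, ?_⟩
    ext m u
    rw [dualRep_apply, dualRep_apply, h2]

/-- A perfect eight-dimensional Lie algebra with two three-dimensional representations whose
difference is injective has no nonzero abelian ideal. -/
lemma abelian_eq_bot (hg : Perfect g) (h8 : finrank ℂ g = 8) (hV : finrank ℂ V = 3)
    (φ ψ : g →ₗ⁅ℂ⁆ Module.End ℂ V) (hinj : ∀ x, ψ x = φ x → x = 0)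
    (I : LieIdeal ℂ g) (hI : ∀ x ∈ I, ∀ y ∈ I, ⁅x, y⁆ = 0) : I = ⊥ := by
  by_contra hI0
  have h1 := abelian_le_ker hg h8 hV φ ψ hinj I hI hI0
  have h2 := abelian_le_ker hg h8 hV ψ φ (fun x hx => hinj x hx.symm) I hI hI0
  refine hI0 (le_bot_iff.mp fun x hx => ?_)
  have h1' : φ x = 0 := LieHom.mem_ker.mp (h1 hx)
  have h2' : ψ x = 0 := LieHom.mem_ker.mp (h2 hx)
  exact hinj x (by rw [h1', h2'])

/-! ### From post-Lie structures to pairs of representations -/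

/-- The derivations `P x` of a Lie algebra `N` with nondegenerate Killing form are inner, say
`P x = ad (φ x)`. Both `φ` and `ψ = φ + σ` are then Lie algebra homomorphisms. -/
lemma exists_homs {G N : Type*} [LieRing G] [LieAlgebra ℂ G] [LieRing N] [LieAlgebra ℂ N]
    [FiniteDimensional ℂ N] [LieAlgebra.IsKilling ℂ N] (σ : G ≃ₗ[ℂ] N)
    (P : G →ₗ[ℂ] G →ₗ[ℂ] G) (hP : IsPostLieStructure σ P) :
    ∃ φ ψ : G →ₗ⁅ℂ⁆ N, ∀ x, ψ x = φ x + σ x := by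
  have hinner : ∀ x, ∃ a : N, ∀ y, σ (P x y) = ⁅a, σ y⁆ := by
    intro x
    let D : LieDerivation ℂ N N :=
      { (σ : G →ₗ[ℂ] N) ∘ₗ P x ∘ₗ (σ.symm : N →ₗ[ℂ] G) with
        leibniz' := fun a b => by
          have := congrArg σ (hP.der x (σ.symm a) (σ.symm b))
          simp only [LinearEquiv.apply_symm_apply, map_add] at this
          simp only [LinearMap.coe_comp, LinearEquiv.coe_coe, Function.comp_apply]
          rw [this, ← lie_skew b, sub_neg_eq_add, add_comm] }
    obtain ⟨a, ha⟩ := LieDerivation.IsKilling.exists_eq_ad D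
    refine ⟨a, fun y => ?_⟩
    have h1 : LieDerivation.ad ℂ N a (σ y) = D (σ y) := by rw [ha]
    have h2 : D (σ y) = σ (P x y) := by
      change σ (P x (σ.symm (σ y))) = _
      rw [σ.symm_apply_apply]
    rw [← h2, ← h1]
    simp
  choose φ hφ using hinner
  have hext : ∀ a b : N, (∀ y : G, ⁅a, σ y⁆ = ⁅b, σ y⁆) → a = b := by
    intro a b h
    rw [← sub_eq_zero, ← LieDerivation.IsKilling.ad_apply_eq_zero_iff (R := ℂ)]
    ext n
    obtain ⟨y, rfl⟩ := σ.surjective n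
    simp [h y]
  have hlie : ∀ x y, φ ⁅x, y⁆ = ⁅φ x, φ y⁆ := by
    intro x y
    refine hext _ _ fun z => ?_
    rw [← hφ, hP.rep, map_sub, hφ, hφ, hφ, hφ, lie_lie]
  let φ' : G →ₗ⁅ℂ⁆ N :=
    { toFun := φ
      map_add' := fun x y => hext _ _ fun z => by rw [← hφ, add_lie, ← hφ, ← hφ]; simp
      map_smul' := fun c x => hext _ _ fun z => by
        rw [← hφ, RingHom.id_apply, smul_lie, ← hφ]; simp
      map_lie' := fun {x y} => hlie x y }
  let ψ' : G →ₗ⁅ℂ⁆ N :=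
    { (φ' : G →ₗ[ℂ] N) + (σ : G →ₗ[ℂ] N) with
      map_lie' := fun {x y} => by
        have h := congrArg σ (hP.diff_eq x y)
        simp only [map_sub, LinearEquiv.apply_symm_apply] at h
        rw [hφ, hφ, sub_eq_sub_iff_add_eq_add] at h
        change φ ⁅x, y⁆ + σ ⁅x, y⁆ = ⁅φ x + σ x, φ y + σ y⁆
        rw [hlie, add_lie, lie_add, lie_add, ← lie_skew (σ x) (φ y)]
        rw [eq_sub_of_add_eq h.symm]
        abel }
  exact ⟨φ', ψ', fun x => rfl⟩

/-- The standard representation of `𝔰𝔩₃(ℂ)`. -/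
noncomputable def stdRep : sl (Fin 3) ℂ →ₗ⁅ℂ⁆ Module.End ℂ (Fin 3 → ℂ) :=
  ((lieEquivMatrix' (R := ℂ) (n := Fin 3)).symm :
    Matrix (Fin 3) (Fin 3) ℂ →ₗ⁅ℂ⁆ Module.End ℂ (Fin 3 → ℂ)).comp (sl (Fin 3) ℂ).incl

lemma stdRep_apply (x : sl (Fin 3) ℂ) : stdRep x = Matrix.toLin' x.1 := by
  rfl

lemma stdRep_injective : Function.Injective stdRep := by
  intro x y h
  rw [stdRep_apply, stdRep_apply] at h
  exact Subtype.ext (Matrix.toLin'.injective h)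

lemma mem_range_stdRep {x : Module.End ℂ (Fin 3 → ℂ)} (hx : LinearMap.trace ℂ _ x = 0) :
    ∃ a, stdRep a = x := by
  refine ⟨⟨LinearMap.toMatrix' x, ?_⟩, ?_⟩
  · change Matrix.trace (LinearMap.toMatrix' x) = 0
    rw [← Matrix.trace_toLin'_eq, Matrix.toLin'_toMatrix']
    exact hx
  · rw [stdRep_apply, Matrix.toLin'_toMatrix']

lemma trace_stdRep (x : sl (Fin 3) ℂ) : LinearMap.trace ℂ _ (stdRep x) = 0 := by
  rw [stdRep_apply, Matrix.trace_toLin'_eq]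
  exact x.2

lemma finrank_sl3 : finrank ℂ (sl (Fin 3) ℂ) = 8 := by
  have h := LinearMap.finrank_range_add_finrank_ker (Matrix.traceLinearMap (Fin 3) ℂ ℂ)
  have hs : LinearMap.range (Matrix.traceLinearMap (Fin 3) ℂ ℂ) = ⊤ := by
    rw [LinearMap.range_eq_top]
    intro c
    exact ⟨Matrix.single 0 0 c, by simp⟩
  rw [hs, finrank_top, finrank_self, Module.finrank_matrix] at h
  simp at h
  have h' : 1 + finrank ℂ (sl (Fin 3) ℂ) = 9 := h
  omega

lemma irred_stdRep : Irred stdRep := by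
  intro U hU
  by_cases h : U = ⊥
  · exact Or.inl h
  · right
    obtain ⟨v, hv, hv0⟩ := U.ne_bot_iff.mp h
    rw [eq_top_iff]
    intro u _
    obtain ⟨x, hx, hx0⟩ := exists_end_apply_eq_trace_eq (by simp) hv0 u 0
    obtain ⟨a, rfl⟩ := mem_range_stdRep hx0
    exact hx ▸ hU a v hv

/-- `𝔰𝔩₃(ℂ)` has no nonzero abelian ideal, because its standard representation is irreducible and
faithful; by the Cartan criterion its Killing form is nondegenerate. -/
instance isKilling_sl3 : LieAlgebra.IsKilling ℂ (sl (Fin 3) ℂ) := by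
  have : LieAlgebra.HasTrivialRadical ℂ (sl (Fin 3) ℂ) := by
    rw [LieAlgebra.hasTrivialRadical_iff_no_abelian_ideals]
    intro I hI
    have h := irred_stdRep.eq_bot_of_commute trace_stdRep
      (I.toSubmodule.map (stdRep : sl (Fin 3) ℂ →ₗ[ℂ] Module.End ℂ (Fin 3 → ℂ))) ?_ ?_ ?_
    · rw [LieSubmodule.eq_bot_iff]
      intro x hx
      have h1 : stdRep x ∈
          I.toSubmodule.map (stdRep : sl (Fin 3) ℂ →ₗ[ℂ] Module.End ℂ (Fin 3 → ℂ)) := ⟨x, hx, rfl⟩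
      rw [h, Submodule.mem_bot] at h1
      exact stdRep_injective (by rw [h1, map_zero])
    · rintro _ ⟨x, hx, rfl⟩ _ ⟨y, hy, rfl⟩
      have h0 : ⁅x, y⁆ = 0 := congrArg Subtype.val (hI.trivial ⟨x, hx⟩ ⟨y, hy⟩)
      rw [LieHom.coe_toLinearMap, ← LieHom.map_lie, h0, map_zero]
    · rintro x _ ⟨y, hy, rfl⟩
      exact ⟨⁅x, y⁆, lie_mem_right ℂ _ I x y hy, by simp⟩
    · rintro _ ⟨x, hx, rfl⟩
      exact trace_stdRep x
  infer_instance

lemma hasTrivialRadical {G N : Type*} [LieRing G] [LieAlgebra ℂ G] [LieRing N] [LieAlgebra ℂ N]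
    [FiniteDimensional ℂ G] (σ : G ≃ₗ[ℂ] N) (hG : Perfect G) (e : N ≃ₗ⁅ℂ⁆ sl (Fin 3) ℂ)
    (P : G →ₗ[ℂ] G →ₗ[ℂ] G) (hP : IsPostLieStructure σ P) :
    LieAlgebra.HasTrivialRadical ℂ G := by
  have hfin : FiniteDimensional ℂ N := σ.finiteDimensional
  have hK : LieAlgebra.IsKilling ℂ N := LieAlgebra.isKilling_of_equiv e.symm
  obtain ⟨φ, ψ, h⟩ := exists_homs σ P hP
  have h8 : finrank ℂ G = 8 := by
    rw [(σ.trans e.toLinearEquiv).finrank_eq, finrank_sl3]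
  rw [LieAlgebra.hasTrivialRadical_iff_no_abelian_ideals]
  intro I hI
  let ρ := stdRep.comp (e : N →ₗ⁅ℂ⁆ sl (Fin 3) ℂ)
  have hρ : Function.Injective ρ := stdRep_injective.comp e.injective
  refine abelian_eq_bot hG h8 (Module.finrank_fin_fun ℂ) (ρ.comp φ) (ρ.comp ψ) (fun x hx => ?_) I
    fun x hx y hy => congrArg Subtype.val (hI.trivial ⟨x, hx⟩ ⟨y, hy⟩)
  have hx' : ψ x = φ x := hρ hx
  rw [h, add_eq_left] at hx'
  exact σ.map_eq_zero_iff.mp hx'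

end PostLieSl3

end PostLie

/-- If `𝔤` is perfect but not semisimple and `𝔫` is isomorphic to `𝔰𝔩₃(ℂ)`, then there is
no post-Lie algebra structure on `(𝔤, 𝔫)`. -/
theorem no_postLie_of_perfect_nonSemisimple_sl3 {G N : Type*} [LieRing G] [LieAlgebra ℂ G]
    [LieRing N] [LieAlgebra ℂ N] [FiniteDimensional ℂ G] (σ : G ≃ₗ[ℂ] N)
    (hG_perfect : ⁅(⊤ : LieIdeal ℂ G), (⊤ : LieIdeal ℂ G)⁆ = ⊤)
    (hG_not_ss : ¬ LieAlgebra.IsSemisimple ℂ G)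
    (hN : Nonempty (N ≃ₗ⁅ℂ⁆ ↥(sl (Fin 3) ℂ))) :
    ¬ ∃ P : G →ₗ[ℂ] G →ₗ[ℂ] G, IsPostLieStructure σ P := by
  rintro ⟨P, hP⟩
  obtain ⟨e⟩ := hN
  have := PostLieSl3.hasTrivialRadical σ (PostLieSl3.perfect_of_lie_top_eq_top hG_perfect) e P hP
  -- a trivial radical forces a nondegenerate Killing form, hence semisimplicity
  exact hG_not_ss inferInstance
end

section
/- Let V be a finite-dimensional complex vector space with two Lie brackets [·,·] and {·,·}, giving Lie algebras 𝔤 = (V,[·,·]) and 𝔫 = (V,{·,·}). Suppose 𝔤 has a Levi decomposition 𝔤 = 𝔰 ⋉ W, where 𝔰 is a simple Lie subalgebra of 𝔤 and W is a nonzero abelian ideal of 𝔤 that is irreducible as an 𝔰-module (so 𝔤 is perfect and not semisimple). If 𝔫 is semisimple, then there is no post-Lie algebra structure on (𝔤,𝔫). -/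
/-!
Since `𝔫` is semisimple, all its derivations are inner, so a post-Lie product has the form
`x · y = {φ x, y}` for a unique linear map `φ`. The axioms then say that both `φ` and `ψ = φ + id`
are Lie algebra homomorphisms `𝔤 → 𝔫` (`exists_pair_of_isPostLieStructure`). Thus it suffices to
exclude two homomorphisms `φ, ψ : 𝔤 → 𝔫` whose difference is a linear bijection. Their kernels meet
trivially, so by irreducibility of `W` one of them, say `ker ψ`, meets `W` trivially, and the roles
of `φ` and `ψ` are symmetric.

The trace of `ker ψ + W` on the simple algebra `𝔰` is an ideal, so it is zero or everything
(`false_of_pair`).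

* If it is zero, then `ker ψ ⊆ W`, hence `ψ` is injective and by dimension bijective. The image of
  `W` is then a nonzero abelian ideal of the semisimple algebra `𝔫`, which is impossible.
* If it is everything, then `𝔰` centralizes `W`, so `W` is a line, and `𝔰 = [𝔰, 𝔰] ⊆ ker ψ`. Hence
  `φ` equals minus the identification on `𝔰`, and `φ(𝔰)` is a perfect subalgebra of codimension
  one in `𝔫`. A perfect algebra acts trivially on the one-dimensional quotient `𝔫 / φ(𝔰)`, so
  `{𝔫, 𝔫} ⊆ φ(𝔰) ≠ 𝔫`, contradicting that `𝔫` is perfect.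

The second case occurs because the one-dimensional trivial `𝔰`-module is allowed as `W`.
-/

open LieAlgebra LieAlgebra.SpecialLinear

/-- A Lie algebra with nondegenerate Killing form is perfect, in dual form: if `F` kills all
brackets, the element representing `F` through the Killing form is central, hence zero. -/
lemma eq_zero_of_forall_apply_lie_eq_zero {N : Type*} [LieRing N] [LieAlgebra ℂ N]
    [FiniteDimensional ℂ N] [LieAlgebra.IsKilling ℂ N] (F : N →ₗ[ℂ] ℂ)
    (hF : ∀ u v : N, F ⁅u, v⁆ = 0) : F = 0 := by
  have hnd := LieAlgebra.IsKilling.killingForm_nondegenerate ℂ N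
  obtain ⟨z, hz⟩ := (LinearMap.BilinForm.toDual (killingForm ℂ N) hnd).surjective F
  have hz' : ∀ v, killingForm ℂ N z v = F v := fun v ↦ by
    rw [← hz, LinearMap.BilinForm.toDual_def]
  have hker : ∀ x : N, (∀ y, killingForm ℂ N x y = 0) → x = 0 := fun x hx ↦ by
    have : x ∈ LinearMap.ker (killingForm ℂ N) := LinearMap.ext hx
    rwa [LieAlgebra.IsKilling.ker_killingForm_eq_bot, Submodule.mem_bot] at this
  have hcomm : ∀ u : N, ⁅z, u⁆ = 0 := fun u ↦ hker _ fun v ↦ by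
    rw [LieModule.traceForm_apply_lie_apply, hz', hF]
  have hz0 : z = 0 := by
    rw [← LieDerivation.IsKilling.ad_apply_eq_zero_iff ℂ N]
    ext u
    simp [hcomm]
  ext v
  rw [← hz', hz0]
  simp

/-- A post-Lie product on `(𝔤, 𝔫)` with `𝔫` semisimple yields two Lie algebra homomorphisms
`𝔤 → 𝔫` whose difference is the identification of the underlying spaces. -/
lemma exists_pair_of_isPostLieStructure {G N : Type*} [LieRing G] [LieAlgebra ℂ G]
    [LieRing N] [LieAlgebra ℂ N] [FiniteDimensional ℂ N] [LieAlgebra.IsKilling ℂ N]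
    (σ : G ≃ₗ[ℂ] N) (P : G →ₗ[ℂ] G →ₗ[ℂ] G) (hP : IsPostLieStructure σ P) :
    ∃ φ ψ : G →ₗ⁅ℂ⁆ N, ∀ x, ψ x - φ x = σ x := by
  have hinner : ∀ x, ∃ n : N, ∀ y, σ (P x y) = ⁅n, σ y⁆ := fun x ↦ by
    let D : LieDerivation ℂ N N :=
      { toLinearMap := σ.toLinearMap ∘ₗ P x ∘ₗ σ.symm.toLinearMap
        leibniz' := fun a b ↦ by
          have h := congrArg σ (hP.der x (σ.symm a) (σ.symm b))
          simp only [map_add, LinearEquiv.apply_symm_apply] at h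
          simp only [LinearMap.comp_apply, LinearEquiv.coe_coe]
          rw [h, ← lie_skew b]
          abel }
    obtain ⟨n, hn⟩ := LieDerivation.IsKilling.exists_eq_ad D
    refine ⟨n, fun y ↦ ?_⟩
    have h := congrArg (fun E : LieDerivation ℂ N N ↦ E (σ y)) hn
    have h' : D (σ y) = σ (P x y) := by
      change σ (P x (σ.symm (σ y))) = _
      rw [LinearEquiv.symm_apply_apply]
    simpa [h'] using h.symm
  choose f hf using hinner
  have huniq : ∀ a b : N, (∀ y, ⁅a, σ y⁆ = ⁅b, σ y⁆) → a = b := fun a b h ↦ by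
    rw [← sub_eq_zero, ← LieDerivation.IsKilling.ad_apply_eq_zero_iff ℂ N]
    ext u
    have := h (σ.symm u)
    rw [LinearEquiv.apply_symm_apply] at this
    simp [this]
  let φ : G →ₗ⁅ℂ⁆ N :=
    { toFun := f
      map_add' := fun a b ↦ huniq _ _ fun y ↦ by
        rw [← hf, map_add, LinearMap.add_apply, map_add, hf, hf, add_lie]
      map_smul' := fun c a ↦ huniq _ _ fun y ↦ by
        rw [← hf, map_smul, LinearMap.smul_apply, map_smul, hf, RingHom.id_apply, smul_lie]
      map_lie' := fun {a b} ↦ huniq _ _ fun y ↦ by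
        rw [← hf, hP.rep, map_sub, hf, hf, hf, hf, lie_lie] }
  have hφ : ∀ x y, σ (P x y) = ⁅φ x, σ y⁆ := hf
  have hbr : ∀ x y, σ ⁅x, y⁆ = ⁅φ x, σ y⁆ + ⁅σ x, φ y⁆ + ⁅σ x, σ y⁆ := fun x y ↦ by
    have h := congrArg σ (hP.diff_eq x y)
    rw [map_sub, map_sub, LinearEquiv.apply_symm_apply, hφ, hφ] at h
    rw [← lie_skew (σ x) (φ y)]
    rw [eq_sub_iff_add_eq] at h
    rw [← h]
    abel
  let ψ : G →ₗ⁅ℂ⁆ N :=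
    { toLinearMap := (φ : G →ₗ[ℂ] N) + σ.toLinearMap
      map_lie' := fun {a b} ↦ by
        change φ ⁅a, b⁆ + σ ⁅a, b⁆ = ⁅φ a + σ a, φ b + σ b⁆
        rw [LieHom.map_lie, hbr]
        simp only [add_lie, lie_add]
        abel }
  refine ⟨φ, ψ, fun x ↦ ?_⟩
  change φ x + σ x - φ x = σ x
  abel

/-- A simple subalgebra is contained in every subspace that contains its brackets. -/
lemma le_of_simple_of_lie_mem {G : Type*} [LieRing G] [LieAlgebra ℂ G]
    (s : LieSubalgebra ℂ G) (hs : LieAlgebra.IsSimple ℂ s) (U : Submodule ℂ G)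
    (hU : ∀ x ∈ s, ∀ y ∈ s, ⁅x, y⁆ ∈ U) : s.toSubmodule ≤ U := by
  let I : LieIdeal ℂ s :=
    { toSubmodule := U.comap s.toSubmodule.subtype
      lie_mem := fun {x m} _ ↦ hU x x.2 m m.2 }
  have hI : ∀ x y : s, ⁅x, y⁆ ∈ I := fun x y ↦ hU x x.2 y y.2
  rcases hs.eq_bot_or_eq_top I with h | h
  · refine absurd ⟨fun x y ↦ ?_⟩ hs.non_abelian
    have := hI x y
    rwa [h, LieSubmodule.mem_bot] at this
  · intro x hx
    have : (⟨x, hx⟩ : s) ∈ I := h ▸ LieSubmodule.mem_top _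
    exact this

/-- A semisimple Lie algebra contains no perfect subalgebra of codimension one, for a subalgebra
given as the image of a simple algebra: `F` spans the functionals vanishing on it, and `v` spans a
complement. -/
lemma false_of_codim_one {G N : Type*} [LieRing G] [LieAlgebra ℂ G]
    [LieRing N] [LieAlgebra ℂ N] [FiniteDimensional ℂ N] [LieAlgebra.IsKilling ℂ N]
    (s : LieSubalgebra ℂ G) (hs : LieAlgebra.IsSimple ℂ s) (φ : G →ₗ⁅ℂ⁆ N)
    (F : N →ₗ[ℂ] ℂ) (v : N) (hFv : F v ≠ 0) (hFs : ∀ x ∈ s, F (φ x) = 0)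
    (hspan : ∀ n : N, ∃ x ∈ s, ∃ t : ℂ, n = φ x + t • v) : False := by
  have hss : ∀ x ∈ s, ∀ y ∈ s, F ⁅φ x, φ y⁆ = 0 := fun x hx y hy ↦ by
    rw [← LieHom.map_lie]; exact hFs _ (s.lie_mem hx hy)
  have htwo : ∀ x ∈ s, ∀ y ∈ s, F ⁅φ x, ⁅φ y, v⁆⁆ * F v = F ⁅φ y, v⁆ * F ⁅φ x, v⁆ := by
    intro x hx y hy
    obtain ⟨z, hz, t, ht⟩ := hspan ⁅φ y, v⁆
    rw [ht, lie_add, lie_smul]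
    simp only [map_add, map_smul, smul_eq_mul, hss x hx z hz, hFs z hz]
    ring
  -- The character by which `s` acts on the one-dimensional quotient vanishes.
  have hchar : ∀ x ∈ s, F ⁅φ x, v⁆ = 0 := by
    let U : Submodule ℂ G :=
      { carrier := {x | F ⁅φ x, v⁆ = 0}
        add_mem' := fun {a b} ha hb ↦ by
          simp only [Set.mem_ofPred_eq] at *
          rw [map_add, add_lie, map_add, ha, hb, add_zero]
        zero_mem' := by simp
        smul_mem' := fun c a ha ↦ by
          simp only [Set.mem_ofPred_eq] at *
          rw [map_smul, smul_lie, map_smul, ha, smul_zero] }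
    refine le_of_simple_of_lie_mem s hs U fun x hx y hy ↦ ?_
    change F ⁅φ ⁅x, y⁆, v⁆ = 0
    apply mul_right_cancel₀ hFv
    rw [LieHom.map_lie, lie_lie, map_sub, sub_mul, htwo x hx y hy, htwo y hy x hx]
    ring
  refine hFv ?_
  rw [eq_zero_of_forall_apply_lie_eq_zero F fun a b ↦ ?_, LinearMap.zero_apply]
  obtain ⟨x, hx, t, rfl⟩ := hspan a
  obtain ⟨y, hy, r, rfl⟩ := hspan b
  have hvy : F ⁅v, φ y⁆ = 0 := by rw [← lie_skew, map_neg, hchar y hy, neg_zero]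
  simp only [add_lie, lie_add, smul_lie, lie_smul, map_add, map_smul, lie_self,
    hss x hx y hy, hchar x hx, hvy, smul_zero, add_zero]

/-- Two homomorphisms `φ, ψ` from `𝔰 ⋉ W` to a semisimple Lie algebra cannot differ by a linear
bijection when `ker ψ` meets `W` trivially. -/
lemma false_of_pair {G N : Type*} [LieRing G] [LieAlgebra ℂ G] [LieRing N] [LieAlgebra ℂ N]
    [FiniteDimensional ℂ N] [LieAlgebra.IsKilling ℂ N] (τ : G ≃ₗ[ℂ] N)
    (s : LieSubalgebra ℂ G) (hs : LieAlgebra.IsSimple ℂ s)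
    (W : LieIdeal ℂ G) (hW_ne : W ≠ ⊥)
    (hW_abelian : ∀ x ∈ W, ∀ y ∈ W, ⁅x, y⁆ = 0)
    (h_inf : s.toSubmodule ⊓ W.toSubmodule = ⊥)
    (h_sup : s.toSubmodule ⊔ W.toSubmodule = ⊤)
    (hW_irreducible : ∀ U : Submodule ℂ G, U ≤ W.toSubmodule →
      (∀ x ∈ s, ∀ u ∈ U, ⁅x, u⁆ ∈ U) → U = ⊥ ∨ U = W.toSubmodule)
    (φ ψ : G →ₗ⁅ℂ⁆ N) (hdiff : ∀ x, ψ x - φ x = τ x)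
    (hker : ∀ x ∈ W, ψ x = 0 → x = 0) : False := by
  have hdec : ∀ x : G, ∃ a ∈ s, ∃ w ∈ W, a + w = x := fun x ↦ by
    have hx : x ∈ s.toSubmodule ⊔ W.toSubmodule := h_sup ▸ Submodule.mem_top
    simpa [Submodule.mem_sup] using hx
  -- The elements of `W` and of `ker ψ` commute, as the two ideals meet trivially.
  have hKW : ∀ k, ψ k = 0 → ∀ w ∈ W, ⁅k, w⁆ = 0 := fun k hk w hw ↦
    hker _ (lie_mem_right ℂ G W k w hw) (by rw [LieHom.map_lie, hk, zero_lie])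
  obtain ⟨w, hw, hw0⟩ : ∃ w ∈ W, w ≠ 0 := by
    by_contra! h
    exact hW_ne ((LieSubmodule.eq_bot_iff W).mpr h)
  -- The trace on `s` of the ideal `ker ψ + W`.
  let I : LieIdeal ℂ s :=
    { toSubmodule := (ψ.ker ⊔ W).toSubmodule.comap s.toSubmodule.subtype
      lie_mem := fun {x m} hm ↦ lie_mem_right ℂ G (ψ.ker ⊔ W) x m hm }
  have hI : ∀ x : s, x ∈ I ↔ ∃ k, ψ k = 0 ∧ ∃ u ∈ W, k + u = x := fun x ↦ by
    change (x : G) ∈ ψ.ker ⊔ W ↔ _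
    simp [LieSubmodule.mem_sup]
  rcases hs.eq_bot_or_eq_top I with h | h
  · have hinj : Function.Injective (ψ : G →ₗ[ℂ] N) := by
      rw [← LinearMap.ker_eq_bot, LinearMap.ker_eq_bot']
      intro k hk
      obtain ⟨a, ha, u, hu, rfl⟩ := hdec k
      have haI : (⟨a, ha⟩ : s) ∈ I :=
        (hI _).mpr ⟨a + u, hk, -u, neg_mem hu, by simp⟩
      rw [h, LieSubmodule.mem_bot] at haI
      obtain rfl : a = 0 := congrArg Subtype.val haI
      rw [zero_add] at hk ⊢
      exact hker u hu hk
    have : FiniteDimensional ℂ G := τ.symm.finiteDimensional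
    have hsurj : Function.Surjective (ψ : G →ₗ[ℂ] N) :=
      (LinearMap.injective_iff_surjective_of_finrank_eq_finrank τ.finrank_eq).mp hinj
    let J : LieIdeal ℂ N :=
      { toSubmodule := W.toSubmodule.map (ψ : G →ₗ[ℂ] N)
        lie_mem := by
          rintro x _ ⟨u, hu, rfl⟩
          obtain ⟨y, rfl⟩ := hsurj x
          exact ⟨⁅y, u⁆, lie_mem_right ℂ G W y u hu, ψ.map_lie y u⟩ }
    have hJ : IsLieAbelian J := by
      refine ⟨?_⟩
      rintro ⟨_, x, hx, rfl⟩ ⟨_, y, hy, rfl⟩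
      apply Subtype.ext
      change ⁅ψ x, ψ y⁆ = 0
      rw [← LieHom.map_lie, hW_abelian x hx y hy, map_zero]
    have hJ0 : J = ⊥ := LieAlgebra.IsKilling.ideal_eq_bot_of_isLieAbelian J
    have hmem : ψ w ∈ J := ⟨w, hw, rfl⟩
    rw [hJ0, LieSubmodule.mem_bot] at hmem
    exact hw0 (hker w hw hmem)
  · have hsKW : ∀ x ∈ s, ∃ k, ψ k = 0 ∧ ∃ u ∈ W, k + u = x := fun x hx ↦
      (hI ⟨x, hx⟩).mp (h ▸ LieSubmodule.mem_top _)
    have hsW : ∀ x ∈ s, ∀ u ∈ W, ⁅x, u⁆ = 0 := fun x hx u hu ↦ by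
      obtain ⟨k, hk, r, hr, rfl⟩ := hsKW x hx
      rw [add_lie, hKW k hk u hu, hW_abelian r hr u hu, add_zero]
    have hsK : ∀ x ∈ s, ψ x = 0 := by
      refine le_of_simple_of_lie_mem s hs (LinearMap.ker (ψ : G →ₗ[ℂ] N)) fun x hx y hy ↦ ?_
      obtain ⟨k, hk, r, hr, rfl⟩ := hsKW x hx
      change ψ ⁅k + r, y⁆ = 0
      have hry : ⁅r, y⁆ = 0 := by rw [← lie_skew, hsW y hy r hr, neg_zero]
      rw [add_lie, hry, add_zero, LieHom.map_lie, hk, zero_lie]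
    have hφs : ∀ x ∈ s, τ x = -φ x := fun x hx ↦ by rw [← hdiff, hsK x hx, zero_sub]
    have hline : Submodule.span ℂ {w} = W.toSubmodule := by
      have hle : Submodule.span ℂ {w} ≤ W.toSubmodule := by
        rw [Submodule.span_singleton_le_iff_mem]; exact hw
      refine (hW_irreducible _ hle fun x hx u hu ↦ ?_).resolve_left ?_
      · rw [hsW x hx u (hle hu)]; exact zero_mem _
      · rwa [Submodule.span_singleton_eq_bot]
    have hws : w ∉ s.toSubmodule := fun hws ↦ hw0 <| by
      have : w ∈ s.toSubmodule ⊓ W.toSubmodule := ⟨hws, hw⟩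
      rwa [h_inf, Submodule.mem_bot] at this
    obtain ⟨f, hfw, hfs⟩ := Submodule.exists_le_ker_of_notMem hws
    refine false_of_codim_one s hs φ (f ∘ₗ τ.symm.toLinearMap) (τ w) ?_ (fun x hx ↦ ?_)
      fun n ↦ ?_
    · simpa using hfw
    · have hx' : φ x = τ (-x) := by rw [map_neg, hφs x hx, neg_neg]
      have : f x = 0 := hfs hx
      simp [hx', this]
    · obtain ⟨a, ha, u, hu, hau⟩ := hdec (τ.symm n)
      have hu' : u ∈ Submodule.span ℂ {w} := hline ▸ hu
      obtain ⟨t, rfl⟩ := Submodule.mem_span_singleton.mp hu'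
      refine ⟨-a, neg_mem ha, t, ?_⟩
      rw [← τ.apply_symm_apply n, ← hau, map_add, map_smul, hφs a ha, map_neg]

/-- Suppose `𝔤` has a Levi decomposition `𝔤 = 𝔰 ⋉ W`, where `𝔰` is a simple subalgebra
and `W` is a nonzero abelian ideal which is irreducible as an `𝔰`-module.  If `𝔫` is
semisimple, then there is no post-Lie algebra structure on `(𝔤, 𝔫)`. -/
theorem no_postLie_of_simple_ltimes_irreducible_semisimple
    {G N : Type*} [LieRing G] [LieAlgebra ℂ G] [LieRing N] [LieAlgebra ℂ N]
    [FiniteDimensional ℂ G] (σ : G ≃ₗ[ℂ] N)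
    (s : LieSubalgebra ℂ G) (hs : LieAlgebra.IsSimple ℂ s)
    (W : LieIdeal ℂ G) (hW_ne : W ≠ ⊥)
    (hW_abelian : ∀ x ∈ W, ∀ y ∈ W, ⁅x, y⁆ = 0)
    (h_inf : s.toSubmodule ⊓ W.toSubmodule = ⊥)
    (h_sup : s.toSubmodule ⊔ W.toSubmodule = ⊤)
    (hW_irreducible : ∀ U : Submodule ℂ G, U ≤ W.toSubmodule →
      (∀ x ∈ s, ∀ u ∈ U, ⁅x, u⁆ ∈ U) → U = ⊥ ∨ U = W.toSubmodule)
    (hN : LieAlgebra.IsSemisimple ℂ N) :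
    ¬ ∃ P : G →ₗ[ℂ] G →ₗ[ℂ] G, IsPostLieStructure σ P := by
  rintro ⟨P, hP⟩
  have : FiniteDimensional ℂ N := σ.finiteDimensional
  have : LieAlgebra.IsKilling ℂ N := inferInstance
  obtain ⟨φ, ψ, hdiff⟩ := exists_pair_of_isPostLieStructure σ P hP
  rcases hW_irreducible (W.toSubmodule ⊓ LinearMap.ker (ψ : G →ₗ[ℂ] N)) inf_le_left
    (fun x _ u hu ↦ ⟨lie_mem_right ℂ G W x u hu.1, by
      have hu0 : ψ u = 0 := hu.2
      change ψ ⁅x, u⁆ = 0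
      rw [LieHom.map_lie, hu0, lie_zero]⟩) with h | h
  · refine false_of_pair σ s hs W hW_ne hW_abelian h_inf h_sup hW_irreducible φ ψ hdiff
      fun x hx hx0 ↦ ?_
    have hmem : x ∈ W.toSubmodule ⊓ LinearMap.ker (ψ : G →ₗ[ℂ] N) := ⟨hx, hx0⟩
    rwa [h, Submodule.mem_bot] at hmem
  · refine false_of_pair (σ.trans (LinearEquiv.neg ℂ)) s hs W hW_ne hW_abelian h_inf h_sup
      hW_irreducible ψ φ (fun x ↦ ?_) fun x hx hx0 ↦ ?_
    · simp [← hdiff]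
    · have hψ : ψ x = 0 := (h.ge hx).2
      have hσ := hdiff x
      rw [hψ, hx0, sub_zero] at hσ
      exact σ.map_eq_zero_iff.mp hσ.symm
end

section
/- Let V be a 6-dimensional complex vector space with two Lie brackets [·,·] and {·,·}, giving Lie algebras 𝔤 = (V,[·,·]) and 𝔫 = (V,{·,·}). If 𝔤 is perfect but not semisimple and 𝔫 is isomorphic to 𝔰𝔩₂(ℂ) ⊕ 𝔰𝔩₂(ℂ), then there is no post-Lie algebra structure on (𝔤,𝔫). -/
/-!
Write `N` for `𝔫`.  Since `N ≅ 𝔰𝔩₂ ⊕ 𝔰𝔩₂` has nondegenerate Killing form, every derivation of `N` is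
inner, so a post-Lie product has the form `x · y = {φ x, y}` for a unique linear map `φ : G → N`.
The axioms then say that `φ` and `ψ = φ + σ` are both Lie algebra homomorphisms `G → N`
(`exists_lieHom_pair`).  Composing them with the two projections of `𝔰𝔩₂ ⊕ 𝔰𝔩₂` gives four
homomorphisms `G → 𝔰𝔩₂` with no common kernel, because `ψ - φ = σ` is injective.

The key point (`lieHom_sl2_eq_zero_of_abelian`) is that a homomorphism `f` from a perfect Lie algebra
to `𝔰𝔩₂` kills every abelian ideal `I`: if `a = f i ≠ 0` with `i ∈ I`, then `f I` lies in the
centralizer `ℂ a` of `a`, so `G` acts on `a` through a character; this character is zero as `G` is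
perfect, so `f G` centralizes `a`, hence is abelian, hence is zero.  Therefore `G` has no nonzero
abelian ideal, and Cartan's criterion makes it semisimple.  The same lemma applied to
`𝔰𝔩₂ ⊕ 𝔰𝔩₂` itself shows that its Killing form is nondegenerate.
-/

open LieAlgebra LieAlgebra.SpecialLinear

open scoped DirectSum

/-- In `𝔰𝔩₂(ℂ)` the centralizer of a nonzero element is the line it spans. -/
lemma sl2_centralizer (a b : sl (Fin 2) ℂ) (ha : a ≠ 0) (hab : ⁅b, a⁆ = 0) :
    ∃ c : ℂ, b = c • a := by
  obtain ⟨a, ha'⟩ := a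
  obtain ⟨b, hb'⟩ := b
  have hta : a 0 0 + a 1 1 = 0 := by
    have := (LinearMap.mem_ker).1 ha'
    simpa [Matrix.trace_fin_two] using this
  have htb : b 0 0 + b 1 1 = 0 := by
    have := (LinearMap.mem_ker).1 hb'
    simpa [Matrix.trace_fin_two] using this
  have hm : b * a - a * b = 0 := by
    have := congrArg Subtype.val hab
    simpa [Ring.lie_def] using this
  have h00 := congrFun (congrFun hm 0) 0
  have h01 := congrFun (congrFun hm 0) 1
  have h10 := congrFun (congrFun hm 1) 0
  simp only [Matrix.sub_apply, Matrix.mul_apply, Fin.sum_univ_two, Matrix.zero_apply]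
    at h00 h01 h10
  have ha11 : a 1 1 = - a 0 0 := by linear_combination hta
  have hb11 : b 1 1 = - b 0 0 := by linear_combination htb
  rw [ha11, hb11] at h01 h10
  have key : ∀ c : ℂ, b 0 0 = c * a 0 0 → b 0 1 = c * a 0 1 → b 1 0 = c * a 1 0 →
      ∃ c : ℂ, (⟨b, hb'⟩ : sl (Fin 2) ℂ) = c • (⟨a, ha'⟩ : sl (Fin 2) ℂ) := by
    intro c e1 e2 e3
    refine ⟨c, Subtype.ext ?_⟩
    change b = c • a
    ext i j
    fin_cases i <;> fin_cases j <;> simp [e1, e2, e3, ha11, hb11]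
  by_cases h1 : a 0 0 = 0
  · by_cases h2 : a 0 1 = 0
    · by_cases h3 : a 1 0 = 0
      · refine absurd (Subtype.ext ?_) ha
        change a = 0
        ext i j
        fin_cases i <;> fin_cases j <;> simp [h1, h2, h3, ha11]
      · refine key (b 1 0 / a 1 0) ?_ ?_ ?_ <;> field_simp <;> grind
    · refine key (b 0 1 / a 0 1) ?_ ?_ ?_ <;> field_simp <;> grind
  · refine key (b 0 0 / a 0 0) ?_ ?_ ?_ <;> field_simp <;> grind

/-- In a perfect Lie algebra, a linear map vanishing on all brackets is zero. -/
lemma linearMap_eq_zero_of_perfect {L W : Type*} [LieRing L] [LieAlgebra ℂ L]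
    [AddCommGroup W] [Module ℂ W] (hp : ⁅(⊤ : LieIdeal ℂ L), (⊤ : LieIdeal ℂ L)⁆ = ⊤)
    (g : L →ₗ[ℂ] W) (hg : ∀ x y : L, g ⁅x, y⁆ = 0) : g = 0 := by
  have hle : (⊤ : Submodule ℂ L) ≤ LinearMap.ker g := by
    rw [← LieSubmodule.top_toSubmodule (R := ℂ) (L := L) (M := L), ← hp,
      LieSubmodule.lieIdeal_oper_eq_linear_span', Submodule.span_le]
    rintro _ ⟨x, -, y, -, rfl⟩
    exact hg x y
  ext x
  exact hle Submodule.mem_top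

lemma lieHom_sl2_eq_zero_of_abelian {L : Type*} [LieRing L] [LieAlgebra ℂ L]
    (hp : ⁅(⊤ : LieIdeal ℂ L), (⊤ : LieIdeal ℂ L)⁆ = ⊤) (f : L →ₗ⁅ℂ⁆ sl (Fin 2) ℂ)
    (I : LieIdeal ℂ L) (hI : IsLieAbelian I) (i : L) (hi : i ∈ I) : f i = 0 := by
  by_contra ha
  have hcomm : ∀ j ∈ I, ⁅j, i⁆ = 0 := fun j hj =>
    congrArg Subtype.val (hI.trivial ⟨j, hj⟩ ⟨i, hi⟩)
  have hchar : ∀ x : L, ∃ c : ℂ, ⁅f x, f i⁆ = c • f i := fun x => by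
    rw [← LieHom.map_lie]
    refine sl2_centralizer _ _ ha ?_
    rw [← LieHom.map_lie, hcomm _ (lie_mem_right ℂ L I x i hi), map_zero]
  -- `x ↦ ⁅f x, f i⁆` is a multiple of a character, so it vanishes on brackets.
  have hcent : ∀ x : L, ⁅f x, f i⁆ = 0 := by
    have h0 := linearMap_eq_zero_of_perfect hp
      { toFun := fun x => ⁅f x, f i⁆
        map_add' := fun x y => by rw [map_add, add_lie]
        map_smul' := fun c x => by rw [map_smul, smul_lie, RingHom.id_apply] } (fun x y => by
          obtain ⟨c, hc⟩ := hchar x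
          obtain ⟨d, hd⟩ := hchar y
          change ⁅f ⁅x, y⁆, f i⁆ = 0
          rw [LieHom.map_lie, lie_lie, hd, hc, lie_smul, lie_smul, hc, hd, smul_comm, sub_self])
    exact fun x => LinearMap.congr_fun h0 x
  -- Hence `f` takes values in the line `ℂ • f i` and vanishes on brackets.
  have hf := linearMap_eq_zero_of_perfect hp f.toLinearMap (fun x y => by
    obtain ⟨c, hc⟩ := sl2_centralizer _ _ ha (hcent x)
    obtain ⟨d, hd⟩ := sl2_centralizer _ _ ha (hcent y)
    change f ⁅x, y⁆ = 0
    rw [LieHom.map_lie, hc, hd, lie_smul, smul_lie, lie_self, smul_zero, smul_zero])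
  exact ha (LinearMap.congr_fun hf i)

/-- A perfect Lie algebra whose homomorphisms to `𝔰𝔩₂(ℂ)` separate points has trivial radical. -/
lemma hasTrivialRadical_of_separating {L : Type*} [LieRing L] [LieAlgebra ℂ L]
    (hp : ⁅(⊤ : LieIdeal ℂ L), (⊤ : LieIdeal ℂ L)⁆ = ⊤)
    (hsep : ∀ x : L, (∀ f : L →ₗ⁅ℂ⁆ sl (Fin 2) ℂ, f x = 0) → x = 0) :
    HasTrivialRadical ℂ L := by
  rw [hasTrivialRadical_iff_no_abelian_ideals]
  intro I hI
  rw [eq_bot_iff]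
  intro x hx
  exact (LieSubmodule.mem_bot x).2
    (hsep x fun f => lieHom_sl2_eq_zero_of_abelian hp f I hI x hx)

/-- Every element of `𝔰𝔩₂(ℂ)` is a sum of two brackets: with `H, E, F` the standard basis,
`p H + q E + r F = [H, (q/2) E - (r/2) F] + [E, p F]`. -/
lemma sl2_eq_lie_add_lie (x : sl (Fin 2) ℂ) :
    ∃ a b c d : sl (Fin 2) ℂ, x = ⁅a, b⁆ + ⁅c, d⁆ := by
  obtain ⟨x, hx'⟩ := x
  have hx : x 1 1 = - x 0 0 := by
    have := (LinearMap.mem_ker).1 hx'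
    have : x 0 0 + x 1 1 = 0 := by simpa [Matrix.trace_fin_two] using this
    linear_combination this
  have hmem : ∀ p q r : ℂ, !![p, q; r, -p] ∈ sl (Fin 2) ℂ := fun p q r => by
    refine LinearMap.mem_ker.2 ?_
    simp [Matrix.trace_fin_two]
  refine ⟨⟨_, hmem 1 0 0⟩, ⟨_, hmem 0 (x 0 1 / 2) (-(x 1 0) / 2)⟩, ⟨_, hmem 0 1 0⟩,
    ⟨_, hmem 0 0 (x 0 0)⟩, Subtype.ext ?_⟩
  change x = (!![1, 0; 0, -1] * !![0, x 0 1 / 2; -(x 1 0) / 2, -0] -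
      !![0, x 0 1 / 2; -(x 1 0) / 2, -0] * !![1, 0; 0, -1]) +
    (!![0, 1; 0, -0] * !![0, 0; x 0 0, -0] - !![0, 0; x 0 0, -0] * !![0, 1; 0, -0])
  ext i j
  fin_cases i <;> fin_cases j <;> simp [hx] <;> ring

lemma directSum_sl2_perfect :
    ⁅(⊤ : LieIdeal ℂ (⨁ _i : Fin 2, ↥(sl (Fin 2) ℂ))),
      (⊤ : LieIdeal ℂ (⨁ _i : Fin 2, ↥(sl (Fin 2) ℂ)))⁆ = ⊤ := by
  rw [eq_top_iff]
  intro x _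
  induction x using DirectSum.induction_on with
  | zero => exact zero_mem _
  | add x y hx hy => exact add_mem (hx trivial) (hy trivial)
  | of i x =>
    obtain ⟨a, b, c, d, rfl⟩ := sl2_eq_lie_add_lie x
    have hl : ∀ a b : sl (Fin 2) ℂ,
        DirectSum.of (fun _ : Fin 2 => ↥(sl (Fin 2) ℂ)) i ⁅a, b⁆ =
          ⁅DirectSum.of (fun _ : Fin 2 => ↥(sl (Fin 2) ℂ)) i a,
            DirectSum.of (fun _ : Fin 2 => ↥(sl (Fin 2) ℂ)) i b⁆ := fun a b =>
      (DirectSum.lieAlgebraOf ℂ (Fin 2) (fun _ => ↥(sl (Fin 2) ℂ)) i).map_lie a b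
    rw [map_add, hl, hl]
    exact add_mem (LieSubmodule.lie_mem_lie trivial trivial)
      (LieSubmodule.lie_mem_lie trivial trivial)

lemma isKilling_directSum_sl2 : IsKilling ℂ (⨁ _i : Fin 2, ↥(sl (Fin 2) ℂ)) := by
  have : HasTrivialRadical ℂ (⨁ _i : Fin 2, ↥(sl (Fin 2) ℂ)) := by
    refine hasTrivialRadical_of_separating directSum_sl2_perfect fun x hx => ?_
    ext i : 1
    exact hx (DirectSum.lieAlgebraComponent ℂ (Fin 2) (fun _ => ↥(sl (Fin 2) ℂ)) i)
  infer_instance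

/-- A post-Lie product on `(G, N)`, the Killing form of `N` being nondegenerate, comes
from two Lie algebra homomorphisms `φ, ψ : G → N` whose difference is the identification `σ`. -/
lemma exists_lieHom_pair {G N : Type*} [LieRing G] [LieAlgebra ℂ G] [LieRing N] [LieAlgebra ℂ N]
    [FiniteDimensional ℂ N] [IsKilling ℂ N] (σ : G ≃ₗ[ℂ] N) (P : G →ₗ[ℂ] G →ₗ[ℂ] G)
    (hP : IsPostLieStructure σ P) :
    ∃ φ ψ : G →ₗ⁅ℂ⁆ N, ∀ x, ψ x - φ x = σ x := by
  have hinner : ∀ x : G, ∃ a : N, ∀ y : N, ⁅a, y⁆ = σ (P x (σ.symm y)) := fun x => by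
    let D : LieDerivation ℂ N N :=
      { toLinearMap := σ.toLinearMap ∘ₗ P x ∘ₗ σ.symm.toLinearMap
        leibniz' := fun a b => by
          have h := congrArg σ (hP.der x (σ.symm a) (σ.symm b))
          simp only [LinearEquiv.apply_symm_apply, map_add] at h
          simp only [LinearMap.comp_apply, LinearEquiv.coe_coe, h]
          rw [← lie_skew b, sub_neg_eq_add, add_comm] }
    obtain ⟨a, ha⟩ := LieDerivation.IsKilling.exists_eq_ad D
    exact ⟨a, fun y => by simpa [D] using LieDerivation.congr_fun ha y⟩
  choose φ hφ using hinner
  have hext : ∀ a b : N, (∀ y : N, ⁅a, y⁆ = ⁅b, y⁆) → a = b := fun a b h => by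
    have : LieDerivation.ad ℂ N (a - b) = 0 := by
      ext y
      simp [h y]
    exact sub_eq_zero.1 ((LieDerivation.IsKilling.ad_apply_eq_zero_iff ℂ N _).1 this)
  have hadd : ∀ x y, φ (x + y) = φ x + φ y := fun x y => hext _ _ fun z => by
    simp [hφ, add_lie]
  have hsmul : ∀ (c : ℂ) x, φ (c • x) = c • φ x := fun c x => hext _ _ fun z => by
    simp [hφ, smul_lie]
  have hlie : ∀ x y, φ ⁅x, y⁆ = ⁅φ x, φ y⁆ := fun x y => hext _ _ fun z => by
    rw [lie_lie]
    simp [hφ, hP.rep]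
  -- The first post-Lie axiom, `[x, y] = {x, y} + {φ x, y} + {x, φ y}`, transported to `N`.
  have hσ : ∀ x y, σ ⁅x, y⁆ = ⁅φ x, σ y⁆ + ⁅σ x, φ y⁆ + ⁅σ x, σ y⁆ := fun x y => by
    have h := congrArg σ (hP.diff_eq x y)
    rw [← lie_skew (σ x) (φ y), hφ, hφ]
    simp only [map_sub, LinearEquiv.apply_symm_apply, LinearEquiv.symm_apply_apply] at h ⊢
    rw [← sub_eq_add_neg, h, sub_add_cancel]
  refine ⟨⟨⟨⟨φ, hadd⟩, hsmul⟩, fun {x y} => hlie x y⟩,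
    ⟨⟨⟨fun x => φ x + σ x, fun x y => ?_⟩, fun c x => ?_⟩, fun {x y} => ?_⟩, fun x => ?_⟩
  · rw [hadd, map_add]; abel
  · simp [hsmul]
  · change φ ⁅x, y⁆ + σ ⁅x, y⁆ = ⁅φ x + σ x, φ y + σ y⁆
    rw [hlie, hσ]
    simp only [add_lie, lie_add]
    abel
  · exact add_sub_cancel_left (φ x) (σ x)

/-- If `V` is 6-dimensional, `𝔤` is perfect but not semisimple, and `𝔫` is isomorphic to
`𝔰𝔩₂(ℂ) ⊕ 𝔰𝔩₂(ℂ)`, then there is no post-Lie algebra structure on `(𝔤, 𝔫)`. -/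
theorem no_postLie_of_perfect_nonSemisimple_sl2_plus_sl2
    {G N : Type*} [LieRing G] [LieAlgebra ℂ G] [LieRing N] [LieAlgebra ℂ N]
    [FiniteDimensional ℂ G] (σ : G ≃ₗ[ℂ] N)
    (hdim : Module.finrank ℂ G = 6)
    (hG_perfect : ⁅(⊤ : LieIdeal ℂ G), (⊤ : LieIdeal ℂ G)⁆ = ⊤)
    (hG_not_ss : ¬ LieAlgebra.IsSemisimple ℂ G)
    (hN : Nonempty (N ≃ₗ⁅ℂ⁆ (⨁ _i : Fin 2, ↥(sl (Fin 2) ℂ)))) :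
    ¬ ∃ P : G →ₗ[ℂ] G →ₗ[ℂ] G, IsPostLieStructure σ P := by
  rintro ⟨P, hP⟩
  obtain ⟨e⟩ := hN
  have hfin : FiniteDimensional ℂ N := σ.finiteDimensional
  have hS : IsKilling ℂ (⨁ _i : Fin 2, ↥(sl (Fin 2) ℂ)) := isKilling_directSum_sl2
  have hK : IsKilling ℂ N := isKilling_of_equiv e.symm
  obtain ⟨φ, ψ, hφψ⟩ := exists_lieHom_pair σ P hP
  have hrad : HasTrivialRadical ℂ G := by
    refine hasTrivialRadical_of_separating hG_perfect fun x hx => ?_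
    have hzero : ∀ f : G →ₗ⁅ℂ⁆ N, f x = 0 := fun f => by
      have he : e (f x) = 0 := by
        ext i : 1
        exact hx (((DirectSum.lieAlgebraComponent ℂ (Fin 2)
          (fun _ => ↥(sl (Fin 2) ℂ)) i).comp e.toLieHom).comp f)
      exact e.injective (he.trans (map_zero e.toLieHom).symm)
    have h := hφψ x
    rw [hzero φ, hzero ψ, sub_zero] at h
    exact σ.map_eq_zero_iff.1 h.symm
  exact hG_not_ss inferInstance
end

section
/- Let V be a finite-dimensional complex vector space with two Lie brackets [·,·] and {·,·}, giving Lie algebras 𝔤 = (V,[·,·]) and 𝔫 = (V,{·,·}). Suppose 𝔤 is perfect and 𝔫 is reductive with 1-dimensional center, i.e. 𝔫 = [𝔫,𝔫] ⊕ Z(𝔫) where [𝔫,𝔫] is semisimple and dim Z(𝔫) = 1. Then there is no post-Lie algebra structure on (𝔤,𝔫). -/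
/-!
Write `L x = P x` for the left multiplications and let `D = [𝔫,𝔫]`. Each `L x` is a derivation of
`𝔫`, so it preserves both `D` and `Z(𝔫)`. As `Z(𝔫)` is a line, `L` acts on it by scalars; scalars
commute and `𝔤 = [𝔤,𝔤]`, so this action is zero. Since `𝔫 = D ⊕ Z(𝔫)`, all products `P x y` then
lie in `D`, hence so does `[x,y] = {x,y} + P x y - P y x`. Thus `𝔤 = [𝔤,𝔤] ⊆ D`, so `D = 𝔫` meets
`Z(𝔫)` nontrivially, a contradiction.
-/

open LieAlgebra LieAlgebra.SpecialLinear

/-- A subspace of a perfect Lie algebra containing all brackets is everything. -/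
lemma submodule_eq_top_of_perfect {G : Type*} [LieRing G] [LieAlgebra ℂ G]
    (hG : ⁅(⊤ : LieIdeal ℂ G), (⊤ : LieIdeal ℂ G)⁆ = ⊤) (W : Submodule ℂ G)
    (hW : ∀ x y : G, ⁅x, y⁆ ∈ W) : W = ⊤ := by
  have h := congrArg LieSubmodule.toSubmodule hG
  rw [LieSubmodule.lieIdeal_oper_eq_linear_span', LieSubmodule.top_toSubmodule] at h
  rw [eq_top_iff, ← h, Submodule.span_le]
  rintro _ ⟨x, -, y, -, rfl⟩
  exact hW x y

/-- If `𝔤` is perfect and `𝔫` is reductive with 1-dimensional center, i.e.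
`𝔫 = [𝔫,𝔫] ⊕ Z(𝔫)` with `[𝔫,𝔫]` semisimple and `dim Z(𝔫) = 1`, then there is no
post-Lie algebra structure on `(𝔤, 𝔫)`. -/
theorem no_postLie_of_perfect_reductive_oneDimCenter
    {G N : Type*} [LieRing G] [LieAlgebra ℂ G] [LieRing N] [LieAlgebra ℂ N]
    [FiniteDimensional ℂ G] (σ : G ≃ₗ[ℂ] N)
    (hG_perfect : ⁅(⊤ : LieIdeal ℂ G), (⊤ : LieIdeal ℂ G)⁆ = ⊤)
    (h_der_ss : LieAlgebra.IsSemisimple ℂ ↥(⁅(⊤ : LieIdeal ℂ N), (⊤ : LieIdeal ℂ N)⁆ : LieIdeal ℂ N))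
    (h_inf : (⁅(⊤ : LieIdeal ℂ N), (⊤ : LieIdeal ℂ N)⁆ : LieIdeal ℂ N).toSubmodule ⊓
        (LieAlgebra.center ℂ N).toSubmodule = ⊥)
    (h_sup : (⁅(⊤ : LieIdeal ℂ N), (⊤ : LieIdeal ℂ N)⁆ : LieIdeal ℂ N).toSubmodule ⊔
        (LieAlgebra.center ℂ N).toSubmodule = ⊤)
    (h_center : Module.finrank ℂ ↥(LieAlgebra.center ℂ N) = 1) :
    ¬ ∃ P : G →ₗ[ℂ] G →ₗ[ℂ] G, IsPostLieStructure σ P := by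
  rintro ⟨P, hP⟩
  set D : LieIdeal ℂ N := ⁅(⊤ : LieIdeal ℂ N), (⊤ : LieIdeal ℂ N)⁆ with hD
  have hbr : ∀ a b : N, ⁅a, b⁆ ∈ D := fun a b =>
    LieSubmodule.lie_mem_lie (LieSubmodule.mem_top a) (LieSubmodule.mem_top b)
  have hderN : ∀ (x : G) (a b : N), σ (P x (σ.symm ⁅a, b⁆)) =
      ⁅σ (P x (σ.symm a)), b⁆ + ⁅a, σ (P x (σ.symm b))⁆ := by
    intro x a b
    have h := congrArg σ (hP.der x (σ.symm a) (σ.symm b))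
    simpa using h
  have hPD : ∀ (x : G) (d : N), d ∈ D → σ (P x (σ.symm d)) ∈ D := by
    intro x d hd
    have hle : D.toSubmodule ≤ D.toSubmodule.comap
        (σ.toLinearMap ∘ₗ P x ∘ₗ σ.symm.toLinearMap) := by
      conv_lhs => rw [hD, LieSubmodule.lieIdeal_oper_eq_linear_span']
      rw [Submodule.span_le]
      rintro _ ⟨a, -, b, -, rfl⟩
      change σ (P x (σ.symm ⁅a, b⁆)) ∈ D
      rw [hderN]
      exact add_mem (hbr _ _) (hbr _ _)
    exact hle hd
  have hPZ : ∀ (x : G) (c : N), c ∈ LieAlgebra.center ℂ N →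
      σ (P x (σ.symm c)) ∈ LieAlgebra.center ℂ N := by
    intro x c hc
    rw [LieModule.mem_maxTrivSubmodule] at hc ⊢
    intro a
    have h := hderN x a c
    rw [hc a, hc] at h
    simpa using h.symm
  obtain ⟨⟨e, he⟩, he0, hspan⟩ := finrank_eq_one_iff'.mp h_center
  have hspan' : ∀ c ∈ LieAlgebra.center ℂ N, ∃ r : ℂ, r • e = c := by
    intro c hc
    obtain ⟨r, hr⟩ := hspan ⟨c, hc⟩
    exact ⟨r, congrArg Subtype.val hr⟩
  have hscal : ∀ x : G, ∃ r : ℂ, P x (σ.symm e) = r • σ.symm e := by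
    intro x
    obtain ⟨r, hr⟩ := hspan' _ (hPZ x e he)
    refine ⟨r, ?_⟩
    rw [← map_smul, hr, LinearEquiv.symm_apply_apply]
  have hker : LinearMap.ker (P.flip (σ.symm e)) = ⊤ := by
    refine submodule_eq_top_of_perfect hG_perfect _ fun x y => ?_
    obtain ⟨r, hr⟩ := hscal x
    obtain ⟨s, hs⟩ := hscal y
    rw [LinearMap.mem_ker, LinearMap.flip_apply, hP.rep, hs, hr, map_smul, map_smul, hs, hr,
      smul_comm, sub_self]
  have hPe : ∀ x : G, P x (σ.symm e) = 0 := by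
    intro x
    have hx : x ∈ LinearMap.ker (P.flip (σ.symm e)) := hker ▸ Submodule.mem_top
    simpa using hx
  have hPall : ∀ x y : G, σ (P x y) ∈ D := by
    intro x y
    have hy : σ y ∈ D.toSubmodule ⊔ (LieAlgebra.center ℂ N).toSubmodule :=
      h_sup ▸ Submodule.mem_top
    obtain ⟨d, hd, c, hc, hdc⟩ := Submodule.mem_sup.mp hy
    obtain ⟨r, rfl⟩ := hspan' c hc
    have hy' : y = σ.symm d + r • σ.symm e := by
      rw [← map_smul, ← map_add, hdc, LinearEquiv.symm_apply_apply]
    rw [hy', map_add, map_smul, hPe, smul_zero, add_zero]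
    exact hPD x d hd
  have htop : D.toSubmodule.comap σ.toLinearMap = ⊤ := by
    refine submodule_eq_top_of_perfect hG_perfect _ fun x y => ?_
    have h : ⁅x, y⁆ = P x y - P y x + σ.symm ⁅σ x, σ y⁆ := by
      rw [hP.diff_eq, sub_add_cancel]
    change σ ⁅x, y⁆ ∈ D
    rw [h, map_add, map_sub, LinearEquiv.apply_symm_apply]
    exact add_mem (sub_mem (hPall x y) (hPall y x)) (hbr _ _)
  have heD : e ∈ D := by
    have h : σ.symm e ∈ D.toSubmodule.comap σ.toLinearMap := htop ▸ Submodule.mem_top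
    simpa using h
  have hebot : e ∈ D.toSubmodule ⊓ (LieAlgebra.center ℂ N).toSubmodule := ⟨heD, he⟩
  rw [h_inf, Submodule.mem_bot] at hebot
  exact he0 (Subtype.ext hebot)
end

section
/- Let V be a finite-dimensional complex vector space with two Lie brackets [·,·] and {·,·}, giving Lie algebras 𝔤 = (V,[·,·]) and 𝔫 = (V,{·,·}). Suppose 𝔤 is perfect and 𝔫 is complete (i.e. 𝔫 has trivial center and every derivation of 𝔫 is inner) but not perfect. Then there is no post-Lie algebra structure on (𝔤,𝔫). -/
/-!
Each left multiplication `y ↦ x · y` is a derivation of `𝔫`, hence inner, so every product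
`x · y` lies in `{𝔫, 𝔫}`. As `[x, y] = {x, y} + x · y - y · x`, this gives `[𝔤, 𝔤] ⊆ {𝔫, 𝔫}`.
If `𝔤` is perfect, the left side is all of `V`, so `𝔫` is perfect, a contradiction.
-/

open LieAlgebra LieAlgebra.SpecialLinear

/-- The left multiplications of a post-Lie structure, transported to `N`, are inner as soon as all
derivations of `N` are. -/
lemma IsPostLieStructure.exists_inner {G N : Type*} [LieRing G] [LieAlgebra ℂ G]
    [LieRing N] [LieAlgebra ℂ N] {σ : G ≃ₗ[ℂ] N} {P : G →ₗ[ℂ] G →ₗ[ℂ] G}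
    (h : IsPostLieStructure σ P)
    (hN_inner : ∀ D : LieDerivation ℂ N N, ∃ x : N, D = LieDerivation.ad ℂ N x) (x : G) :
    ∃ a : N, ∀ y : G, σ (P x y) = ⁅a, σ y⁆ := by
  let D : LieDerivation ℂ N N :=
    { toLinearMap := σ.toLinearMap ∘ₗ P x ∘ₗ σ.symm.toLinearMap
      leibniz' := fun u v => by
        have := congrArg σ (h.der x (σ.symm u) (σ.symm v))
        simp only [LinearEquiv.apply_symm_apply, map_add] at this
        simp only [LinearMap.comp_apply, LinearEquiv.coe_coe, this]
        rw [← lie_skew v, sub_neg_eq_add, add_comm] }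
  obtain ⟨a, ha⟩ := hN_inner D
  refine ⟨a, fun y => ?_⟩
  have hD : D (σ y) = σ (P x y) := by
    change σ (P x (σ.symm (σ y))) = σ (P x y)
    rw [LinearEquiv.symm_apply_apply]
  rw [← hD, ha, LieDerivation.ad_apply_apply]

/-- If `𝔤` is perfect and `𝔫` is complete (trivial center and all derivations inner) but
not perfect, then there is no post-Lie algebra structure on `(𝔤, 𝔫)`. -/
theorem no_postLie_of_perfect_complete_nonPerfect
    {G N : Type*} [LieRing G] [LieAlgebra ℂ G] [LieRing N] [LieAlgebra ℂ N]
    [FiniteDimensional ℂ G] (σ : G ≃ₗ[ℂ] N)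
    (hG_perfect : ⁅(⊤ : LieIdeal ℂ G), (⊤ : LieIdeal ℂ G)⁆ = ⊤)
    (hN_center : LieAlgebra.center ℂ N = ⊥)
    (hN_inner : ∀ D : LieDerivation ℂ N N, ∃ x : N, D = LieDerivation.ad ℂ N x)
    (hN_not_perfect : ⁅(⊤ : LieIdeal ℂ N), (⊤ : LieIdeal ℂ N)⁆ ≠ ⊤) :
    ¬ ∃ P : G →ₗ[ℂ] G →ₗ[ℂ] G, IsPostLieStructure σ P := by
  rintro ⟨P, h⟩
  apply hN_not_perfect
  set I : LieIdeal ℂ N := ⁅(⊤ : LieIdeal ℂ N), (⊤ : LieIdeal ℂ N)⁆ with hI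
  have hmem : ∀ u v : N, ⁅u, v⁆ ∈ I := fun u v =>
    LieSubmodule.lie_mem_lie (LieSubmodule.mem_top u) (LieSubmodule.mem_top v)
  have hP : ∀ x y : G, σ (P x y) ∈ I := fun x y => by
    obtain ⟨a, ha⟩ := h.exists_inner hN_inner x
    rw [ha]
    exact hmem _ _
  have hbr : ∀ x y : G, σ ⁅x, y⁆ ∈ I := fun x y => by
    have e : σ ⁅x, y⁆ = σ (P x y) - σ (P y x) + ⁅σ x, σ y⁆ := by
      rw [← map_sub, h.diff_eq, map_sub, LinearEquiv.apply_symm_apply, sub_add_cancel]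
    rw [e]
    exact add_mem (sub_mem (hP x y) (hP y x)) (hmem _ _)
  have hle : (⊤ : Submodule ℂ G) ≤ I.toSubmodule.comap σ.toLinearMap := by
    rw [← LieSubmodule.top_toSubmodule (R := ℂ) (L := G) (M := G), ← hG_perfect,
      LieSubmodule.lieIdeal_oper_eq_linear_span', Submodule.span_le]
    rintro _ ⟨x, -, y, -, rfl⟩
    exact hbr x y
  rw [eq_top_iff]
  intro n _
  have := hle (Submodule.mem_top (x := σ.symm n))
  simpa using this
end

section
/- Let V be a finite-dimensional complex vector space with two Lie brackets [·,·] and {·,·}, giving Lie algebras 𝔤 = (V,[·,·]) and 𝔫 = (V,{·,·}). If 𝔤 is abelian (i.e. [x,y] = 0 for all x,y ∈ V) and 𝔫 is perfect and nonzero, then there is no post-Lie algebra structure on (𝔤,𝔫). -/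
/-!
Write `D x` for left multiplication `P x` and `{x, y}` for the bracket of `𝔫` transported to `G`.
When `𝔤` is abelian, a post-Lie structure says that the `D x` are pairwise commuting derivations
of `𝔫` and that `{x, y} = D y x - D x y`.  Geometrically, the graph `{(x, D x)}` is an abelian
subalgebra of the semidirect product of `𝔫` with the abelian algebra `D G`, so this semidirect
product is a sum of two abelian subalgebras, and the argument is that of Itô's theorem: such a sum
is metabelian.

Concretely, the derivation rule gives `D (D b x) y = D (D b y) x` (`postLie_swap`), which together
with commutativity of the `D x` forces `{D b x, D c y} = 0` (`postLie_bracket_eq_zero`).  Every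
bracket is a difference of elements `D b x`, so `{{𝔫, 𝔫}, {𝔫, 𝔫}} = 0`; a perfect `𝔫` is then
abelian, hence zero.
-/

open LieAlgebra LieAlgebra.SpecialLinear

section

variable {G N : Type*} [LieRing G] [LieAlgebra ℂ G] [LieRing N] [LieAlgebra ℂ N]
  {σ : G ≃ₗ[ℂ] N} {P : G →ₗ[ℂ] G →ₗ[ℂ] G}

lemma postLie_comm (h : IsPostLieStructure σ P) (hG : ∀ x y : G, ⁅x, y⁆ = 0) (x y z : G) :
    P x (P y z) = P y (P x z) := by
  have := h.rep x y z
  rw [hG, map_zero, LinearMap.zero_apply] at this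
  exact (sub_eq_zero.mp this.symm)

lemma postLie_bracket (h : IsPostLieStructure σ P) (hG : ∀ x y : G, ⁅x, y⁆ = 0) (x y : G) :
    σ.symm ⁅σ x, σ y⁆ = P y x - P x y := by
  have := h.diff_eq x y
  rw [hG, zero_sub] at this
  rw [← neg_sub (P x y), this, neg_neg]

/-- The derivation rule for `P b` after both sides are expanded through
`{x, y} = P y x - P x y`. -/
lemma postLie_swap (h : IsPostLieStructure σ P) (hG : ∀ x y : G, ⁅x, y⁆ = 0) (b x y : G) :
    P (P b x) y = P (P b y) x := by
  have := h.der b x y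
  simp only [postLie_bracket h hG, map_sub] at this
  rw [postLie_comm h hG b y x, postLie_comm h hG b x y] at this
  rw [← sub_eq_zero] at this ⊢
  rw [← this]
  abel

lemma postLie_bracket_eq_zero (h : IsPostLieStructure σ P) (hG : ∀ x y : G, ⁅x, y⁆ = 0)
    (b c x y : G) : ⁅σ (P b x), σ (P c y)⁆ = 0 := by
  apply σ.symm.injective
  rw [postLie_bracket h hG, map_zero, sub_eq_zero]
  calc P (P c y) (P b x) = P b (P (P c y) x) := postLie_comm h hG _ _ _
    _ = P b (P (P c x) y) := by rw [postLie_swap h hG c y x]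
    _ = P (P c x) (P b y) := postLie_comm h hG _ _ _
    _ = P (P c (P b y)) x := postLie_swap h hG _ _ _
    _ = P (P b (P c y)) x := by rw [postLie_comm h hG c b y]
    _ = P (P b x) (P c y) := postLie_swap h hG _ _ _

/-- `𝔫` is metabelian: each inner bracket is a difference of elements `P b x`. -/
lemma postLie_lie_lie (h : IsPostLieStructure σ P) (hG : ∀ x y : G, ⁅x, y⁆ = 0)
    (x y z w : N) : ⁅⁅x, y⁆, ⁅z, w⁆⁆ = 0 := by
  have key (u v : N) : ⁅u, v⁆ = σ (P (σ.symm v) (σ.symm u)) - σ (P (σ.symm u) (σ.symm v)) := by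
    rw [← map_sub, ← postLie_bracket h hG]
    simp
  rw [key x y, key z w]
  simp only [sub_lie, lie_sub, postLie_bracket_eq_zero h hG, sub_zero]

end

/-- If `𝔤` is abelian and `𝔫` is perfect and nonzero, then there is no post-Lie algebra
structure on `(𝔤, 𝔫)`. -/
theorem no_postLie_of_abelian_perfect
    {G N : Type*} [LieRing G] [LieAlgebra ℂ G] [LieRing N] [LieAlgebra ℂ N]
    [FiniteDimensional ℂ G] [Nontrivial N] (σ : G ≃ₗ[ℂ] N)
    (hG_abelian : ∀ x y : G, ⁅x, y⁆ = 0)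
    (hN_perfect : ⁅(⊤ : LieIdeal ℂ N), (⊤ : LieIdeal ℂ N)⁆ = ⊤) :
    ¬ ∃ P : G →ₗ[ℂ] G →ₗ[ℂ] G, IsPostLieStructure σ P := by
  rintro ⟨P, h⟩
  have hspan : Submodule.span ℂ {m : N | ∃ x y : N, ⁅x, y⁆ = m} = ⊤ := by
    have := congrArg LieSubmodule.toSubmodule hN_perfect
    rw [LieSubmodule.lieIdeal_oper_eq_linear_span'] at this
    simpa using this
  have hab : ∀ u v : N, ⁅u, v⁆ = 0 := by
    intro u v
    have hu : u ∈ Submodule.span ℂ {m : N | ∃ x y : N, ⁅x, y⁆ = m} := hspan ▸ Submodule.mem_top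
    have hv : v ∈ Submodule.span ℂ {m : N | ∃ x y : N, ⁅x, y⁆ = m} := hspan ▸ Submodule.mem_top
    induction hu using Submodule.span_induction with
    | zero => simp
    | add a b _ _ ha hb => rw [add_lie, ha, hb, add_zero]
    | smul c a _ ha => rw [smul_lie, ha, smul_zero]
    | mem a ha =>
      obtain ⟨x, y, rfl⟩ := ha
      induction hv using Submodule.span_induction with
      | zero => simp
      | add a b _ _ ha hb => rw [lie_add, ha, hb, add_zero]
      | smul c a _ ha => rw [lie_smul, ha, smul_zero]
      | mem b hb =>
        obtain ⟨z, w, rfl⟩ := hb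
        exact postLie_lie_lie h hG_abelian x y z w
  have hbot : Submodule.span ℂ {m : N | ∃ x y : N, ⁅x, y⁆ = m} = ⊥ := by
    rw [Submodule.span_eq_bot]
    rintro _ ⟨x, y, rfl⟩
    exact hab x y
  exact bot_ne_top (hbot.symm.trans hspan)
end
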